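/- arXiv:2404.07190 — 4 statements merged into one kernel-verified Lean document; each statement's English description precedes it below -/
import Mathlib

section
/- For every λ > 1 there is some C ≥ 1 such that the following holds. Let G be an n-vertex graph in which every vertex has degree between d and λd, and let A ⊆ V(G) be chosen by including each vertex of G independently at random with probability 1/C. Then, with probability tending to 1 as n → ∞, G contains a (d' ± 10^5·λ^5·log n)-nearly-regular subgraph H with d/C ≤ d' ≤ d and A ⊆ V(H). -/
/-- The probability, under the distribution of a `p`-random subset of `Fin n`
(each element included independently with probability `p`), of the event `E`. -/
noncomputable def bernoulliProb (n : ℕ) (p : ℝ) (E : Set (Finset (Fin n))) : ℝ :=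
  ∑ S : Finset (Fin n),
    E.indicator (fun A => p ^ A.card * (1 - p) ^ (n - A.card)) S

open Classical in
noncomputable def dg {V : Type*} [Fintype V] (H : SimpleGraph V) (v : V) : ℕ :=
  (Finset.univ.filter (fun u => H.Adj v u)).card

noncomputable def Phi {V : Type*} [Fintype V] (S : Finset V) (H : SimpleGraph V) (U L : ℝ) : ℝ :=
  ∑ v ∈ S, (Real.exp ((dg H v - U) / 16) + Real.exp ((L - dg H v) / 16))

def delV {V : Type*} (H : SimpleGraph V) (u : V) : SimpleGraph V where
  Adj a b := H.Adj a b ∧ a ≠ u ∧ b ≠ u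
  symm := ⟨fun _ _ h => ⟨h.1.symm, h.2.2, h.2.1⟩⟩
  loopless := ⟨fun a h => H.loopless.irrefl a h.1⟩

def delE {V : Type*} (H : SimpleGraph V) (x y : V) : SimpleGraph V where
  Adj a b := H.Adj a b ∧ ¬ (a = x ∧ b = y) ∧ ¬ (a = y ∧ b = x)
  symm := ⟨fun _ _ h => ⟨h.1.symm, fun k => h.2.2 ⟨k.2, k.1⟩, fun k => h.2.1 ⟨k.2, k.1⟩⟩⟩
  loopless := ⟨fun a h => H.loopless.irrefl a h.1⟩

open Classical in
lemma dg_delV {V : Type*} [Fintype V] (H : SimpleGraph V) (u v : V) (h : v ≠ u) :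
    (dg (delV H u) v : ℝ) = dg H v - if H.Adj v u then 1 else 0 := by
  have h1 : (Finset.univ.filter (fun w => (delV H u).Adj v w)) =
      (Finset.univ.filter (fun w => H.Adj v w)).erase u := by
    ext w
    rw [Finset.mem_erase, Finset.mem_filter, Finset.mem_filter]
    simp only [Finset.mem_univ, true_and]
    change (H.Adj v w ∧ v ≠ u ∧ w ≠ u) ↔ _
    tauto
  unfold dg
  rw [h1]
  split_ifs with h2
  · rw [Finset.cast_card_erase_of_mem (by simpa using h2)]
  · rw [Finset.erase_eq_of_notMem (by simpa using h2)]; simp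

open Classical in
lemma dg_delE {V : Type*} [Fintype V] (H : SimpleGraph V) (x y v : V) :
    (dg (delE H x y) v : ℝ) = dg H v - if H.Adj x y ∧ (v = x ∨ v = y) then 1 else 0 := by
  by_cases hxy : H.Adj x y
  swap
  · have : delE H x y = H := by
      ext a b
      simp only [delE]
      constructor
      · exact fun h => h.1
      · intro h
        refine ⟨h, ?_, ?_⟩
        · rintro ⟨rfl, rfl⟩; exact hxy h
        · rintro ⟨rfl, rfl⟩; exact hxy h.symm
    rw [this]; simp [hxy]
  have hne : x ≠ y := hxy.ne
  by_cases hx : v = x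
  · subst hx
    have h1 : (Finset.univ.filter (fun w => (delE H v y).Adj v w)) =
      (Finset.univ.filter (fun w => H.Adj v w)).erase y := by
      ext w; simp [delE]; tauto
    unfold dg
    rw [h1, Finset.cast_card_erase_of_mem (by simpa using hxy)]
    simp [hxy]
  by_cases hy : v = y
  · subst hy
    have h1 : (Finset.univ.filter (fun w => (delE H x v).Adj v w)) =
      (Finset.univ.filter (fun w => H.Adj v w)).erase x := by
      ext w; simp [delE]; tauto
    unfold dg
    rw [h1, Finset.cast_card_erase_of_mem (by simpa using hxy.symm)]
    simp [hxy]
  · have h1 : (Finset.univ.filter (fun w => (delE H x y).Adj v w)) =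
      (Finset.univ.filter (fun w => H.Adj v w)) := by
      ext w; simp [delE]; tauto
    unfold dg
    rw [h1]; simp [hx, hy]

lemma avg_exists {ι : Type*} [Fintype ι] [Nonempty ι] (w F : ι → ℝ) (hw : ∀ i, 0 ≤ w i)
    (h1 : ∑ i, w i = 1) : ∃ i, F i ≤ ∑ j, w j * F j := by
  by_contra hcon
  push Not at hcon
  obtain ⟨i0, hi0⟩ := Finite.exists_min F
  have : ∑ j, w j * F j ≥ ∑ j, w j * F i0 :=
    Finset.sum_le_sum fun j _ => mul_le_mul_of_nonneg_left (hi0 j) (hw j)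
  rw [← Finset.sum_mul, h1, one_mul] at this
  linarith [hcon i0]

open Classical in
lemma ident {V : Type*} [Fintype V] (H : SimpleGraph V) (s a : V → ℝ)
    (ha : ∀ u, dg H u * a u = ∑ w with H.Adj u w, s w) (v : V) :
    ∑ u with H.Adj v u, (1 + a u / 4) +
      ∑ u with H.Adj v u, (1 + (s u + s v - a u - a v) / 4) = dg H v * (2 + s v / 4) := by
  rw [← Finset.sum_add_distrib]
  have : ∀ u, (1 + a u / 4) + (1 + (s u + s v - a u - a v) / 4)
     = s u / 4 + (2 + (s v - a v)/4) := by intro u; ring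
  simp_rw [this]
  rw [Finset.sum_add_distrib, ← Finset.sum_div, ← ha v, Finset.sum_const, nsmul_eq_mul]
  change _ + (dg H v : ℝ) * _ = _
  ring

lemma e1 : Real.exp (1/16) - 1 ≤ 0.0646 := by
  have := Real.exp_bound' (x := 1/16) (by norm_num) (by norm_num) (n := 3) (by norm_num)
  norm_num [Finset.sum_range_succ, Nat.factorial] at this ⊢
  linarith

lemma e2 : 0.0603 ≤ 1 - Real.exp (-(1/16)) := by
  have h := Real.quadratic_le_exp_of_nonneg (x := 1/16) (by norm_num)
  rw [Real.exp_neg]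
  have : (Real.exp (1/16))⁻¹ ≤ 0.9397 := by
    rw [inv_le_comm₀ (Real.exp_pos _) (by norm_num)]
    refine le_trans ?_ h
    norm_num
  linarith

lemma upper_step {k U P h τ : ℝ} (hk : 0 ≤ k) (hU : 0 < U) (hh : 0 < h) (hhU : h * U ≤ 1)
    (hP0 : 0 ≤ P) (hτ : 5/4 * τ ≤ U / 25) (hP : U ≤ k → 9/4 * k - 5/4 * τ ≤ P) :
    Real.exp ((k - U * Real.exp (-(17/8*h))) / 16) * (1 - h * P * (1 - Real.exp (-(1/16)))) ≤
      Real.exp ((k - U)/16) + h * U := by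
  have hx := Real.add_one_le_exp (-(17/8*h))
  have hd : U - U * Real.exp (-(17/8*h)) ≤ 17/8 * (h * U) := by nlinarith
  have hd0 : 0 ≤ U - U * Real.exp (-(17/8*h)) := by
    have : Real.exp (-(17/8*h)) ≤ 1 := Real.exp_le_one_iff.2 (by linarith)
    nlinarith
  set D := U - U * Real.exp (-(17/8*h)) with hD
  have hs : (k - U * Real.exp (-(17/8*h))) / 16 = (k - U)/16 + D/16 := by rw [hD]; ring
  rw [hs, Real.exp_add, mul_assoc]
  have h2 := e2
  have hhP : 0 ≤ h * P := by positivity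
  rcases le_or_gt U k with hkU | hkU
  · have hP := hP hkU
    have : Real.exp (D/16) * (1 - h * P * (1 - Real.exp (-(1/16)))) ≤ 1 := by
      have h3 := Real.add_one_le_exp (-(h * P * (1 - Real.exp (-(1/16)))))
      calc _ ≤ Real.exp (D/16) * Real.exp (-(h * P * (1 - Real.exp (-(1/16))))) :=
            mul_le_mul_of_nonneg_left (by linarith) (Real.exp_pos _).le
        _ = Real.exp (D/16 + -(h * P * (1 - Real.exp (-(1/16))))) := by rw [Real.exp_add]
        _ ≤ 1 := by
          apply Real.exp_le_one_iff.2
          have h4 : h * P * 0.0603 ≤ h * P * (1 - Real.exp (-(1/16))) :=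
            mul_le_mul_of_nonneg_left h2 hhP
          have h5 : h * (2.21 * k) ≤ h * P := mul_le_mul_of_nonneg_left (by linarith) hh.le
          have h6 : h * U ≤ h * k := mul_le_mul_of_nonneg_left hkU hh.le
          have h7 : 0 ≤ h * k := by positivity
          nlinarith
    have h8 := mul_le_mul_of_nonneg_left this (Real.exp_pos ((k-U)/16)).le
    have : 0 ≤ h * U := by positivity
    linarith
  · have a1 : Real.exp ((k-U)/16) ≤ 1 := Real.exp_le_one_iff.2 (by linarith)
    have a0 := (Real.exp_pos ((k-U)/16))
    have b : Real.exp (D/16) ≤ 1 + h * U := by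
      have hq : D/16 ≤ 17/128 * (h*U) := by linarith
      have := Real.exp_bound_div_one_sub_of_interval (x := D/16) (by linarith) (by linarith)
      refine this.trans ?_
      rw [div_le_iff₀ (by linarith)]
      nlinarith [mul_pos hh hU]
    have b0 := Real.exp_pos (D/16)
    have c1 : Real.exp (D/16) * (1 - h * P * (1 - Real.exp (-(1/16)))) ≤ Real.exp (D/16) := by
      have : 0 ≤ h * P * (1 - Real.exp (-(1/16))) := mul_nonneg hhP (by linarith)
      nlinarith
    nlinarith [mul_pos hh hU]

lemma lower_step {k L P h : ℝ} (hk : 0 ≤ k) (hL : 0 < L) (hh : 0 < h) (hh1 : h ≤ 1/100)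
    (hP0 : 0 ≤ P) (hP : k ≤ L → P ≤ 7/4 * k) (hP' : P ≤ 9/4 * k) :
    Real.exp ((L * Real.exp (-(15/8*h)) - k) / 16) * (1 + h * P * (Real.exp (1/16) - 1)) ≤
      Real.exp ((L - k)/16) + h * k := by
  have h1 := e1
  have h0 : 0 ≤ Real.exp (1/16) - 1 := by linarith [Real.add_one_le_exp (1/16:ℝ)]
  have hhP : 0 ≤ h * P := by positivity
  have hd : 1.85 * (h * L) ≤ L - L * Real.exp (-(15/8*h)) := by
    have hx : Real.exp (-(15/8*h)) ≤ 1 - 1.85 * h := by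
      rw [Real.exp_neg]
      have := Real.quadratic_le_exp_of_nonneg (x := 15/8*h) (by linarith)
      rw [inv_le_comm₀ (Real.exp_pos _) (by linarith)]
      refine le_trans ?_ this
      rw [← one_div, div_le_iff₀ (by linarith)]
      nlinarith [pow_pos hh 3, pow_pos hh 2]
    nlinarith
  set D := L - L * Real.exp (-(15/8*h)) with hD
  have hs : (L * Real.exp (-(15/8*h)) - k) / 16 = (L - k)/16 + -(D/16) := by rw [hD]; ring
  rw [hs, Real.exp_add, mul_assoc]
  have hhL : 0 < h * L := by positivity
  have hhk : 0 ≤ h * k := by positivity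
  have a0 := (Real.exp_pos ((L-k)/16))
  rcases le_or_gt k L with hkL | hkL
  · have hP := hP hkL
    have : Real.exp (-(D/16)) * (1 + h * P * (Real.exp (1/16) - 1)) ≤ 1 := by
      have h3 := Real.add_one_le_exp (h * P * (Real.exp (1/16) - 1))
      calc _ ≤ Real.exp (-(D/16)) * Real.exp (h * P * (Real.exp (1/16) - 1)) :=
            mul_le_mul_of_nonneg_left (by linarith) (Real.exp_pos _).le
        _ = Real.exp (-(D/16) + (h * P * (Real.exp (1/16) - 1))) := by rw [Real.exp_add]
        _ ≤ 1 := by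
          apply Real.exp_le_one_iff.2
          have h4 : h * P * (Real.exp (1/16) - 1) ≤ h * P * 0.0646 :=
            mul_le_mul_of_nonneg_left h1 hhP
          have h5 : h * P ≤ h * (7/4 * L) := mul_le_mul_of_nonneg_left (by linarith) hh.le
          nlinarith
    have h8 := mul_le_mul_of_nonneg_left this a0.le
    linarith
  · have a1 : Real.exp ((L-k)/16) ≤ 1 := Real.exp_le_one_iff.2 (by linarith)
    have b : Real.exp (-(D/16)) ≤ 1 := Real.exp_le_one_iff.2 (by linarith)
    have c0 : 0 ≤ h * P * (Real.exp (1/16) - 1) := by positivity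
    have c1 : h * P * (Real.exp (1/16) - 1) ≤ h * k := by
      have h4 : h * P * (Real.exp (1/16) - 1) ≤ h * P * 0.0646 :=
            mul_le_mul_of_nonneg_left h1 hhP
      have h5 : h * P ≤ h * (9/4 * k) := mul_le_mul_of_nonneg_left (by linarith) hh.le
      linarith
    have d1 : Real.exp (-(D/16)) * (1 + h * P * (Real.exp (1/16) - 1)) ≤ 1 + h * k := by
      have := mul_le_mul_of_nonneg_right b (by linarith : 0 ≤ 1 + h * P * (Real.exp (1/16) - 1))
      linarith
    have := mul_le_mul_of_nonneg_left d1 a0.le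
    nlinarith

open Classical in
lemma step {V : Type*} [Fintype V] (A S : Finset V) (H : SimpleGraph V) (U L h τ : ℝ)
    (hS : ∀ x y, H.Adj x y → x ∈ S) (hAS : A ⊆ S)
    (hL : 0 < L) (hLU : L < U) (hh : 0 < h) (hh1 : h ≤ 1/100) (hhU : h * U ≤ 1)
    (hhn : h * (2 * (Fintype.card V : ℝ) + (Fintype.card V : ℝ)^2) ≤ 1)
    (hτ : 5/4 * τ ≤ U / 25)
    (hA : ∀ v, (((Finset.univ.filter (fun u => H.Adj v u)).filter (fun u => u ∈ A)).card : ℝ) ≤ τ) :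
    ∃ (S' : Finset V) (H' : SimpleGraph V), H' ≤ H ∧ A ⊆ S' ∧ (∀ x y, H'.Adj x y → x ∈ S') ∧
      Phi S' H' (U * Real.exp (-(17/8*h))) (L * Real.exp (-(15/8*h))) ≤
        Phi S H U L + h * ((Fintype.card V : ℝ) * (U + Fintype.card V)) := by
  set n : ℝ := (Fintype.card V : ℝ) with hn
  have hdn : ∀ v, (dg H v : ℝ) ≤ n := fun v => by
    rw [hn]; exact_mod_cast Finset.card_le_univ _
  -- signs
  set s : V → ℝ := fun v => if U ≤ dg H v then 1 else -1 with hs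
  have hs1 : ∀ v, |s v| ≤ 1 := by
    intro v; simp only [hs]; split_ifs <;> simp
  set a : V → ℝ := fun u => (∑ w with H.Adj u w, s w) / dg H u with ha
  have ha1 : ∀ v, |a v| ≤ 1 := by
    intro v
    simp only [ha]
    rw [abs_div, Nat.abs_cast]
    apply div_le_one_of_le₀ _ (by positivity)
    refine (Finset.abs_sum_le_sum_abs _ _).trans ?_
    refine (Finset.sum_le_sum fun w _ => hs1 w).trans ?_
    simp [dg]
  have ha2 : ∀ u, dg H u * a u = ∑ w with H.Adj u w, s w := by
    intro u
    simp only [ha]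
    by_cases h0 : (dg H u : ℝ) = 0
    · have : (Finset.univ.filter (fun w => H.Adj u w)) = ∅ := by
        rw [← Finset.card_eq_zero]; exact_mod_cast h0
      rw [this]; simp
    · field_simp
  set r : V → ℝ := fun u => 1 + a u / 4 with hr
  set q : V → V → ℝ := fun u v => 1 + (s u + s v - a u - a v) / 4 with hq
  have hqs : ∀ u v, q u v = q v u := by intro u v; simp only [hq]; ring
  have hr0 : ∀ u, 0 ≤ r u ∧ r u ≤ 5/4 := by
    intro u; have := abs_le.1 (ha1 u); simp only [hr]; constructor <;> linarith
  have hq0 : ∀ u v, 0 ≤ q u v ∧ q u v ≤ 2 := by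
    intro u v
    have := abs_le.1 (ha1 u); have := abs_le.1 (ha1 v)
    have := abs_le.1 (hs1 u); have := abs_le.1 (hs1 v)
    simp only [hq]; constructor <;> linarith
  -- operations
  let ι := Option (V ⊕ V × V)
  let w0 : V ⊕ V × V → ℝ := Sum.elim (fun u => h * r u) (fun e => h * (q e.1 e.2 / 2))
  have hw00 : ∀ i, 0 ≤ w0 i := by
    rintro (u | e)
    · exact mul_nonneg hh.le (hr0 u).1
    · exact mul_nonneg hh.le (div_nonneg (hq0 _ _).1 (by norm_num))
  have hw0s : ∑ i, w0 i ≤ 1 := by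
    rw [Fintype.sum_sum_type]
    have b1 : ∑ u : V, w0 (Sum.inl u) ≤ ∑ u : V, h * 2 :=
      Finset.sum_le_sum fun u _ => mul_le_mul_of_nonneg_left (by linarith [(hr0 u).2]) hh.le
    have b2 : ∑ e : V × V, w0 (Sum.inr e) ≤ ∑ e : V × V, h * 1 :=
      Finset.sum_le_sum fun e _ => mul_le_mul_of_nonneg_left (by linarith [(hq0 e.1 e.2).2]) hh.le
    simp only [Finset.sum_const, Finset.card_univ, Fintype.card_prod, nsmul_eq_mul] at b1 b2
    push_cast at b2
    rw [← hn] at b1 b2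
    nlinarith
  let w : ι → ℝ := fun o => o.elim (1 - ∑ i, w0 i) w0
  have hw : ∀ o, 0 ≤ w o := by
    rintro (_ | i)
    · change 0 ≤ 1 - ∑ i, w0 i; linarith
    · exact hw00 i
  have hws : ∑ o, w o = 1 := by
    rw [Fintype.sum_option]
    change (1 - ∑ i, w0 i) + ∑ i, w0 i = 1
    ring
  let nS : ι → Finset V := fun o => o.elim S
    (Sum.elim (fun u => if u ∈ A then S else S.erase u) (fun _ => S))
  let nH : ι → SimpleGraph V := fun o => o.elim H
    (Sum.elim (fun u => if u ∈ A then H else delV H u) (fun e => delE H e.1 e.2))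
  let f0 : V → V ⊕ V × V → ℝ := fun v => Sum.elim (fun u => if u ∉ A ∧ H.Adj v u then 1 else 0)
    (fun e => if H.Adj e.1 e.2 ∧ (v = e.1 ∨ v = e.2) then 1 else 0)
  let f : V → ι → ℝ := fun v o => o.elim 0 (f0 v)
  have hSub : ∀ o, nS o ⊆ S := by
    rintro (_ | u | e)
    · exact subset_rfl
    · change (if u ∈ A then S else S.erase u) ⊆ S
      split_ifs
      · exact subset_rfl
      · exact Finset.erase_subset _ _
    · exact subset_rfl
  have hA' : ∀ o, A ⊆ nS o := by
    rintro (_ | u | e)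
    · exact hAS
    · change A ⊆ (if u ∈ A then S else S.erase u)
      split_ifs with hu
      · exact hAS
      · exact Finset.subset_erase.2 ⟨hAS, hu⟩
    · exact hAS
  have hle : ∀ o, nH o ≤ H := by
    rintro (_ | u | e)
    · exact le_rfl
    · change (if u ∈ A then H else delV H u) ≤ H
      split_ifs
      · exact le_rfl
      · intro x y hxy; exact hxy.1
    · intro x y hxy; exact hxy.1
  have hsupp : ∀ o, ∀ x y, (nH o).Adj x y → x ∈ nS o := by
    rintro (_ | u | e) x y hxy
    · exact hS x y hxy
    · change x ∈ (if u ∈ A then S else S.erase u)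
      change (if u ∈ A then H else delV H u).Adj x y at hxy
      split_ifs at hxy ⊢ with hu
      · exact hS x y hxy
      · exact Finset.mem_erase.2 ⟨hxy.2.1, hS x y hxy.1⟩
    · exact hS x y hxy.1
  have hdeg : ∀ o, ∀ v ∈ nS o, (dg (nH o) v : ℝ) = dg H v - f v o := by
    rintro (_ | u | e) v hv
    · change (dg H v : ℝ) = dg H v - 0; ring
    · change (dg (if u ∈ A then H else delV H u) v : ℝ) =
        dg H v - (if u ∉ A ∧ H.Adj v u then 1 else 0)
      change v ∈ (if u ∈ A then S else S.erase u) at hv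
      by_cases hu : u ∈ A
      · simp [hu]
      · simp only [hu, if_false] at hv ⊢
        rw [dg_delV H u v (Finset.mem_erase.1 hv).1]; simp
    · exact dg_delE H e.1 e.2 v
  have hf01 : ∀ v o, f v o = 0 ∨ f v o = 1 := by
    rintro v (_ | u | e)
    · exact Or.inl rfl
    · change (if u ∉ A ∧ H.Adj v u then (1:ℝ) else 0) = 0 ∨ (if u ∉ A ∧ H.Adj v u then (1:ℝ) else 0) = 1
      split_ifs <;> simp
    · change (if H.Adj e.1 e.2 ∧ (v = e.1 ∨ v = e.2) then (1:ℝ) else 0) = 0 ∨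
        (if H.Adj e.1 e.2 ∧ (v = e.1 ∨ v = e.2) then (1:ℝ) else 0) = 1
      split_ifs <;> simp
  -- the drift
  let P : V → ℝ := fun v => ∑ u with H.Adj v u, (if u ∉ A then r u else 0) +
      ∑ u with H.Adj v u, q u v
  have hdrift : ∀ v, ∑ o, w o * f v o = h * P v := by
    intro v
    rw [Fintype.sum_option, Fintype.sum_sum_type, Fintype.sum_prod_type]
    have t1 : w none * f v none = 0 := mul_zero _
    have t2 : ∑ u, w (some (Sum.inl u)) * f v (some (Sum.inl u)) =
        h * ∑ u with H.Adj v u, (if u ∉ A then r u else 0) := by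
      rw [Finset.mul_sum, Finset.sum_filter]
      refine Finset.sum_congr rfl fun u _ => ?_
      change h * r u * (if u ∉ A ∧ H.Adj v u then (1:ℝ) else 0) = _
      by_cases h1 : u ∈ A <;> by_cases h2 : H.Adj v u <;> simp [h1, h2]
    have t3 : ∑ x, ∑ y, w (some (Sum.inr (x, y))) * f v (some (Sum.inr (x, y))) =
        h * ∑ u with H.Adj v u, q u v := by
      have e : ∀ x y, w (some (Sum.inr (x, y))) * f v (some (Sum.inr (x, y))) =
        (if x = v then (if H.Adj v y then h * (q y v / 2) else 0) else 0) +
        (if y = v then (if H.Adj v x then h * (q x v / 2) else 0) else 0) := by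
        intro x y
        change h * (q x y / 2) * (if H.Adj x y ∧ (v = x ∨ v = y) then (1:ℝ) else 0) = _
        by_cases h1 : x = v
        · subst h1
          by_cases h2 : y = x
          · subst h2; simp
          · have : ¬ (x = y) := fun h => h2 h.symm
            by_cases h3 : H.Adj x y <;> simp [h2, h3, hqs x y]
        · by_cases h2 : y = v
          · subst h2
            have h1' : ¬ (y = x) := fun h => h1 h.symm
            by_cases h3 : H.Adj y x
            · simp [h1, h3, h3.symm]
            · have : ¬ H.Adj x y := fun h => h3 h.symm
              simp [h1, h3, this]
          · have h1' : ¬ (v = x) := fun h => h1 h.symm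
            have h2' : ¬ (v = y) := fun h => h2 h.symm
            simp [h1, h2, h1', h2']
      simp_rw [e, Finset.sum_add_distrib]
      rw [Finset.sum_comm]
      simp only [Finset.sum_ite_eq', Finset.mem_univ, if_true]
      rw [Finset.mul_sum, Finset.sum_filter, ← Finset.sum_add_distrib]
      refine Finset.sum_congr rfl fun u _ => ?_
      by_cases h2 : H.Adj v u <;> simp [h2]
      ring
    rw [t1, t2, t3]
    change _ = h * (_ + _)
    ring
  have hid := ident H s a ha2
  have hP0 : ∀ v, 0 ≤ P v := by
    intro v
    refine add_nonneg (Finset.sum_nonneg fun u _ => ?_) (Finset.sum_nonneg fun u _ => (hq0 u v).1)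
    split_ifs
    · exact le_rfl
    · exact (hr0 u).1
  have hPup : ∀ v, P v ≤ dg H v * (2 + s v / 4) := by
    intro v
    rw [← hid v]
    refine add_le_add (Finset.sum_le_sum fun u _ => ?_) le_rfl
    split_ifs
    · exact (hr0 u).1
    · exact le_rfl
  have hPlow : ∀ v, dg H v * (2 + s v / 4) - 5/4 * τ ≤ P v := by
    intro v
    rw [← hid v]
    have : ∑ u with H.Adj v u, r u ≤ ∑ u with H.Adj v u, (if u ∉ A then r u else 0) + 5/4 * τ := by
      have h2 : ∑ u with H.Adj v u, (if u ∈ A then (5/4 : ℝ) else 0) ≤ 5/4 * τ := by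
        rw [← Finset.sum_filter, Finset.sum_const, nsmul_eq_mul]
        linarith [hA v]
      refine le_trans ?_ (add_le_add le_rfl h2)
      rw [← Finset.sum_add_distrib]
      refine Finset.sum_le_sum fun u _ => ?_
      by_cases hu : u ∈ A <;> simp [hu, (hr0 u).2]
    change ∑ u with H.Adj v u, r u + ∑ u with H.Adj v u, q u v - 5/4 * τ ≤ _
    change _ ≤ ∑ u with H.Adj v u, (if u ∉ A then r u else 0) + ∑ u with H.Adj v u, q u v
    linarith
  set U' := U * Real.exp (-(17/8*h)) with hU'
  set L' := L * Real.exp (-(15/8*h)) with hL'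
  obtain ⟨o, ho⟩ := avg_exists w (fun o => Phi (nS o) (nH o) U' L') hw hws
  refine ⟨nS o, nH o, hle o, hA' o, hsupp o, ho.trans ?_⟩
  -- bound the average
  set EU : V → ℝ := fun v => Real.exp ((dg H v - U') / 16) with hEU
  set EL : V → ℝ := fun v => Real.exp ((L' - dg H v) / 16) with hEL
  have hPhi : ∀ o, Phi (nS o) (nH o) U' L' ≤ ∑ v ∈ S,
      ((EU v + EL v) + f v o * (EL v * (Real.exp (1/16) - 1) - EU v * (1 - Real.exp (-(1/16))))) := by
    intro o
    have hterm : ∀ v, Real.exp ((dg H v - f v o - U') / 16) + Real.exp ((L' - (dg H v - f v o)) / 16)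
        = (EU v + EL v) + f v o * (EL v * (Real.exp (1/16) - 1) - EU v * (1 - Real.exp (-(1/16)))) := by
      intro v
      rcases hf01 v o with h0 | h0
      · rw [h0]; simp [hEU, hEL]
      · rw [h0]
        have x1 : ((dg H v:ℝ) - 1 - U') / 16 = (dg H v - U') / 16 + -(1/16) := by ring
        have x2 : (L' - ((dg H v:ℝ) - 1)) / 16 = (L' - dg H v) / 16 + (1/16) := by ring
        rw [x1, x2, Real.exp_add, Real.exp_add]
        simp only [hEU, hEL]
        ring
    unfold Phi
    calc _ = ∑ v ∈ nS o, (Real.exp ((dg H v - f v o - U') / 16) + Real.exp ((L' - (dg H v - f v o)) / 16)) :=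
          Finset.sum_congr rfl fun v hv => by rw [hdeg o v hv]
      _ ≤ ∑ v ∈ S, (Real.exp ((dg H v - f v o - U') / 16) + Real.exp ((L' - (dg H v - f v o)) / 16)) :=
          Finset.sum_le_sum_of_subset_of_nonneg (hSub o) fun v _ _ => by positivity
      _ = _ := Finset.sum_congr rfl fun v _ => hterm v
  calc ∑ o, w o * Phi (nS o) (nH o) U' L'
      ≤ ∑ o, w o * ∑ v ∈ S, ((EU v + EL v) +
          f v o * (EL v * (Real.exp (1/16) - 1) - EU v * (1 - Real.exp (-(1/16))))) :=
        Finset.sum_le_sum fun o _ => mul_le_mul_of_nonneg_left (hPhi o) (hw o)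
    _ = ∑ v ∈ S, (EU v * (1 - h * P v * (1 - Real.exp (-(1/16)))) +
          EL v * (1 + h * P v * (Real.exp (1/16) - 1))) := by
        simp_rw [Finset.mul_sum]
        rw [Finset.sum_comm]
        refine Finset.sum_congr rfl fun v _ => ?_
        simp_rw [mul_add, Finset.sum_add_distrib, ← mul_assoc]
        rw [← Finset.sum_mul, ← Finset.sum_mul, ← Finset.sum_mul, hws, hdrift]
        ring
    _ ≤ ∑ v ∈ S, ((Real.exp ((dg H v - U) / 16) + Real.exp ((L - dg H v) / 16)) + h * (U + n)) := by
        refine Finset.sum_le_sum fun v _ => ?_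
        have k0 : (0:ℝ) ≤ dg H v := Nat.cast_nonneg _
        have u1 := upper_step (k := dg H v) (U := U) (P := P v) (h := h) (τ := τ) k0
          (by linarith) hh hhU (hP0 v) hτ (by
            intro hk
            have e1 := hPlow v
            have : s v = 1 := by simp only [hs]; rw [if_pos hk]
            rw [this] at e1; linarith)
        have l1 := lower_step (k := dg H v) (L := L) (P := P v) (h := h) k0 hL hh hh1 (hP0 v)
          (by
            intro hk
            have e1 := hPup v
            have : s v = -1 := by simp only [hs]; rw [if_neg (by linarith)]
            rw [this] at e1; linarith)
          (by
            have e1 := hPup v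
            have := (abs_le.1 (hs1 v)).2
            nlinarith)
        have : h * dg H v ≤ h * n := mul_le_mul_of_nonneg_left (hdn v) hh.le
        simp only [hEU, hEL]
        rw [← hU'] at u1
        rw [← hL'] at l1
        linarith
    _ ≤ _ := by
        rw [Finset.sum_add_distrib, Finset.sum_const, nsmul_eq_mul]
        unfold Phi
        have c1 : (S.card : ℝ) ≤ n := by rw [hn]; exact_mod_cast Finset.card_le_univ _
        have c2 : 0 ≤ h * (U + n) := by
          have : 0 ≤ n := by rw [hn]; positivity
          have : 0 < U := by linarith
          positivity
        have := mul_le_mul_of_nonneg_right c1 c2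
        linarith

open Classical in
lemma iter {V : Type*} [Fintype V] (A : Finset V) (G : SimpleGraph V) (lam d h τ : ℝ) (T : ℕ)
    (hlam : 1 < lam) (hd : 0 < d) (hG : ∀ v, d ≤ (dg G v : ℝ) ∧ (dg G v : ℝ) ≤ lam * d)
    (hh : 0 < h) (hh1 : h ≤ 1/100) (hhU : h * (lam * d) ≤ 1)
    (hhn : h * (2 * (Fintype.card V : ℝ) + (Fintype.card V : ℝ)^2) ≤ 1)
    (hhT : h * T = 4 * Real.log lam)
    (hτ : 5/4 * τ ≤ d / lam ^ 8 / 25)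
    (hA : ∀ v, (((Finset.univ.filter (fun u => G.Adj v u)).filter (fun u => u ∈ A)).card : ℝ) ≤ τ)
    (t : ℕ) (ht : t ≤ T) :
    ∃ (S : Finset V) (H : SimpleGraph V), H ≤ G ∧ A ⊆ S ∧ (∀ x y, H.Adj x y → x ∈ S) ∧
      Phi S H (lam * d * Real.exp (-(17/8*(h*t)))) (d * Real.exp (-(15/8*(h*t)))) ≤
        2 * (Fintype.card V : ℝ) +
          h * t * ((Fintype.card V : ℝ) * (lam * d + Fintype.card V)) := by
  have hlam0 : 0 < lam := by linarith
  induction t with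
  | zero =>
    refine ⟨Finset.univ, G, le_rfl, Finset.subset_univ _, fun _ _ _ => Finset.mem_univ _, ?_⟩
    unfold Phi
    have : ∑ v : V, (Real.exp ((dg G v - lam * d * Real.exp (-(17/8*(h*((0:ℕ):ℝ))))) / 16) +
        Real.exp ((d * Real.exp (-(15/8*(h*((0:ℕ):ℝ)))) - dg G v) / 16)) ≤ ∑ v : V, (2:ℝ) := by
      refine Finset.sum_le_sum fun v _ => ?_
      simp only [Nat.cast_zero, mul_zero, neg_zero, Real.exp_zero, mul_one]
      have h1 : Real.exp (((dg G v:ℝ) - lam * d)/16) ≤ 1 :=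
        Real.exp_le_one_iff.2 (by linarith [(hG v).2])
      have h2 : Real.exp ((d - (dg G v:ℝ))/16) ≤ 1 :=
        Real.exp_le_one_iff.2 (by linarith [(hG v).1])
      linarith
    refine this.trans ?_
    simp [mul_comm]
  | succ t ih =>
    obtain ⟨S, H, hHG, hAS, hS, hPhi⟩ := ih (by omega)
    have htT : h * t < 4 * Real.log lam := by
      rw [← hhT]
      exact mul_lt_mul_of_pos_left (by exact_mod_cast ht) hh
    have hht : 0 ≤ h * t := by positivity
    set U := lam * d * Real.exp (-(17/8*(h*t))) with hU
    set L := d * Real.exp (-(15/8*(h*t))) with hL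
    have hLU : L < U := by
      have : lam = Real.exp (Real.log lam) := (Real.exp_log hlam0).symm
      have h2 : U = d * Real.exp (Real.log lam + -(17/8*(h*t))) := by
        rw [hU, Real.exp_add, Real.exp_log hlam0]; ring
      rw [h2, hL]
      exact mul_lt_mul_of_pos_left (Real.exp_lt_exp.2 (by linarith)) hd
    have hUle : U ≤ lam * d := by
      rw [hU]
      exact mul_le_of_le_one_right (by positivity) (Real.exp_le_one_iff.2 (by linarith))
    have hUge : d / lam ^ 8 ≤ U := by
      have hl : 0 < Real.log lam := Real.log_pos hlam
      have h9 : (lam ^ 9)⁻¹ ≤ Real.exp (-(17/8*(h*t))) := by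
        have : lam ^ 9 = Real.exp (9 * Real.log lam) := by
          rw [mul_comm, Real.exp_mul, Real.exp_log hlam0]; norm_cast
        rw [this, ← Real.exp_neg]
        exact Real.exp_le_exp.2 (by linarith)
      calc d / lam ^ 8 = lam * d * (lam ^ 9)⁻¹ := by field_simp
        _ ≤ U := mul_le_mul_of_nonneg_left h9 (by positivity)
    obtain ⟨S', H', h1, h2, h3, h4⟩ := step A S H U L h τ hS hAS (by positivity) hLU hh hh1
      (le_trans (mul_le_mul_of_nonneg_left hUle hh.le) hhU) hhn (by linarith) (fun v => by
        refine le_trans ?_ (hA v)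
        norm_cast
        refine Finset.card_le_card (Finset.filter_subset_filter _ ?_)
        intro u hu
        simp only [Finset.mem_filter, Finset.mem_univ, true_and] at hu ⊢
        exact hHG hu)
    refine ⟨S', H', h1.trans hHG, h2, h3, ?_⟩
    have eU : lam * d * Real.exp (-(17/8*(h*((t+1:ℕ):ℝ)))) = U * Real.exp (-(17/8*h)) := by
      rw [hU, mul_assoc (lam * d) (Real.exp _), ← Real.exp_add]; push_cast; ring_nf
    have eL : d * Real.exp (-(15/8*(h*((t+1:ℕ):ℝ)))) = L * Real.exp (-(15/8*h)) := by
      rw [hL, mul_assoc, ← Real.exp_add]; push_cast; ring_nf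
    rw [eU, eL]
    refine h4.trans ?_
    have : h * ((Fintype.card V : ℝ) * (U + Fintype.card V)) ≤
        h * ((Fintype.card V : ℝ) * (lam * d + Fintype.card V)) := by gcongr
    push_cast
    linarith

open Classical in
lemma det {V : Type*} [Fintype V] (A : Finset V) (G : SimpleGraph V) (lam d τ : ℝ)
    (hlam : 1 < lam) (hd : 0 < d) (hG : ∀ v, d ≤ (dg G v : ℝ) ∧ (dg G v : ℝ) ≤ lam * d)
    (hτ : 5/4 * τ ≤ d / lam ^ 8 / 25)
    (hA : ∀ v, (((Finset.univ.filter (fun u => G.Adj v u)).filter (fun u => u ∈ A)).card : ℝ) ≤ τ)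
    (B : ℝ) (hB : 2 * (Fintype.card V : ℝ) +
          4 * Real.log lam * ((Fintype.card V : ℝ) * (lam * d + Fintype.card V)) ≤ Real.exp (B / 16)) :
    ∃ (S : Finset V) (H : SimpleGraph V) (d' : ℝ), H ≤ G ∧ A ⊆ S ∧ (∀ x y, H.Adj x y → x ∈ S) ∧
      d / lam ^ 8 ≤ d' ∧ d' ≤ d ∧ ∀ v ∈ S, d' - B ≤ (dg H v : ℝ) ∧ (dg H v : ℝ) ≤ d' + B := by
  have hlam0 : 0 < lam := by linarith
  have hl : 0 < Real.log lam := Real.log_pos hlam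
  set n : ℝ := (Fintype.card V : ℝ) with hn
  have hn0 : 0 ≤ n := by rw [hn]; positivity
  set M : ℝ := 100 + lam * d + (2 * n + n^2) with hM
  have hM0 : 0 < M := by positivity
  obtain ⟨T, hT⟩ := exists_nat_ge (4 * Real.log lam * M)
  have hT0 : (0:ℝ) < T := lt_of_lt_of_le (by positivity) hT
  set h : ℝ := 4 * Real.log lam / T with hh
  have hpos : 0 < h := by positivity
  have hhM : h * M ≤ 1 := by
    rw [hh, div_mul_eq_mul_div, div_le_one hT0]; exact hT
  have p1 : 0 ≤ h * (lam * d) := by positivity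
  have p2 : 0 ≤ h * (2 * n + n^2) := by positivity
  have hexp : h * M = h * 100 + h * (lam * d) + h * (2 * n + n^2) := by rw [hM]; ring
  have hhT : h * T = 4 * Real.log lam := by rw [hh]; field_simp
  obtain ⟨S, H, h1, h2, h3, h4⟩ := iter A G lam d h τ T hlam hd hG hpos (by linarith)
    (by linarith) (by linarith) hhT hτ hA T le_rfl
  rw [hhT] at h4
  set d' := d * Real.exp (-(15/8*(4 * Real.log lam))) with hd'
  have eU : lam * d * Real.exp (-(17/8*(4 * Real.log lam))) = d' := by
    have : -(15/8*(4 * Real.log lam)) = Real.log lam + -(17/8*(4 * Real.log lam)) := by ring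
    rw [hd', this, Real.exp_add, Real.exp_log hlam0]; ring
  rw [eU] at h4
  refine ⟨S, H, d', h1, h2, h3, ?_, ?_, ?_⟩
  · have h9 : (lam ^ 8)⁻¹ ≤ Real.exp (-(15/8*(4 * Real.log lam))) := by
      have : lam ^ 8 = Real.exp (8 * Real.log lam) := by
        rw [mul_comm, Real.exp_mul, Real.exp_log hlam0]; norm_cast
      rw [this, ← Real.exp_neg]
      exact Real.exp_le_exp.2 (by linarith)
    rw [div_eq_mul_inv]
    exact mul_le_mul_of_nonneg_left h9 hd.le
  · exact mul_le_of_le_one_right hd.le (Real.exp_le_one_iff.2 (by linarith))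
  · intro v hv
    have h5 : Real.exp ((dg H v - d') / 16) + Real.exp ((d' - dg H v) / 16) ≤ Real.exp (B/16) := by
      refine le_trans ?_ (h4.trans hB)
      exact Finset.single_le_sum (f := fun v => Real.exp (((dg H v:ℝ) - d') / 16) + Real.exp ((d' - dg H v) / 16)) (fun v _ => by positivity) hv
    have q1 := Real.exp_le_exp.1 ((le_add_of_nonneg_right (Real.exp_pos _).le).trans h5)
    have q2 := Real.exp_le_exp.1 ((le_add_of_nonneg_left (Real.exp_pos _).le).trans h5)
    constructor <;> linarith

lemma bern_mgf (n : ℕ) (p : ℝ) (N : Finset (Fin n)) :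
    ∑ S : Finset (Fin n), (p ^ S.card * (1 - p) ^ (n - S.card)) * 2 ^ (S ∩ N).card
      = (1 + p) ^ N.card := by
  have h := Finset.prod_add (fun i : Fin n => p * (if i ∈ N then 2 else 1)) (fun _ => 1 - p)
    Finset.univ
  have h1 : ∏ i : Fin n, (p * (if i ∈ N then (2:ℝ) else 1) + (1 - p)) = (1 + p) ^ N.card := by
    have : ∀ i : Fin n, (p * (if i ∈ N then (2:ℝ) else 1) + (1 - p)) = if i ∈ N then 1 + p else 1 := by
      intro i; split_ifs <;> ring
    simp_rw [this]
    rw [Finset.prod_ite_mem, Finset.univ_inter, Finset.prod_const]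
  rw [← h1, h, Finset.powerset_univ]
  refine Finset.sum_congr rfl fun S _ => ?_
  rw [Finset.prod_mul_distrib, Finset.prod_const, Finset.prod_const, Finset.prod_ite_mem,
    Finset.prod_const, ← Finset.compl_eq_univ_sdiff, Finset.card_compl, Fintype.card_fin]
  ring

lemma bern_total (n : ℕ) (p : ℝ) :
    ∑ S : Finset (Fin n), (p ^ S.card * (1 - p) ^ (n - S.card)) = 1 := by
  simpa using bern_mgf n p ∅

lemma bern_bound (n : ℕ) (p τ M : ℝ) (hp : 0 ≤ p) (hp1 : p ≤ 1) (N : Fin n → Finset (Fin n))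
    (hN : ∀ v, ((N v).card : ℝ) ≤ M) (E : Set (Finset (Fin n)))
    (hE : ∀ A : Finset (Fin n), (∀ v, ((A ∩ N v).card : ℝ) ≤ τ) → A ∈ E) :
    1 - n * (Real.exp (p * M) * (2:ℝ) ^ (-τ)) ≤ bernoulliProb n p E := by
  classical
  set w : Finset (Fin n) → ℝ := fun A => p ^ A.card * (1 - p) ^ (n - A.card) with hw
  have hw0 : ∀ A, 0 ≤ w A := fun A => mul_nonneg (pow_nonneg hp _) (pow_nonneg (by linarith) _)
  have key : ∀ A, w A ≤ E.indicator w A + ∑ v, w A * 2 ^ (A ∩ N v).card * (2:ℝ) ^ (-τ) := by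
    intro A
    have hnn : ∀ v, 0 ≤ w A * 2 ^ (A ∩ N v).card * (2:ℝ) ^ (-τ) := fun v => by
      have := hw0 A; positivity
    by_cases h : A ∈ E
    · rw [Set.indicator_of_mem h]
      linarith [Finset.sum_nonneg fun v (_ : v ∈ Finset.univ) => hnn v]
    · rw [Set.indicator_of_notMem h, zero_add]
      have : ∃ v, τ < ((A ∩ N v).card : ℝ) := by
        by_contra hc; push Not at hc; exact h (hE A hc)
      obtain ⟨v, hv⟩ := this
      refine le_trans ?_ (Finset.single_le_sum (fun v _ => hnn v) (Finset.mem_univ v))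
      rw [mul_assoc, ← Real.rpow_natCast, ← Real.rpow_add (by norm_num)]
      exact le_mul_of_one_le_right (hw0 A) (Real.one_le_rpow (by norm_num) (by linarith))
  have hs := Finset.sum_le_sum fun A (_ : A ∈ Finset.univ) => key A
  rw [bern_total, Finset.sum_add_distrib, Finset.sum_comm] at hs
  have h2 : ∑ v, ∑ A, w A * 2 ^ (A ∩ N v).card * (2:ℝ) ^ (-τ) ≤
      ∑ v : Fin n, (Real.exp (p * M) * (2:ℝ) ^ (-τ)) := by
    refine Finset.sum_le_sum fun v _ => ?_
    rw [← Finset.sum_mul, bern_mgf]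
    refine mul_le_mul_of_nonneg_right ?_ (by positivity)
    calc (1+p)^(N v).card ≤ (Real.exp p)^(N v).card :=
          pow_le_pow_left₀ (by linarith) (by linarith [Real.add_one_le_exp p]) _
      _ = Real.exp (p * (N v).card) := by rw [← Real.exp_nat_mul, mul_comm]
      _ ≤ _ := Real.exp_le_exp.2 (mul_le_mul_of_nonneg_left (hN v) hp)
  simp only [Finset.sum_const, Finset.card_univ, Fintype.card_fin, nsmul_eq_mul] at h2
  unfold bernoulliProb
  linarith

lemma ncard_eq_dg {V : Type*} [Fintype V] (H : SimpleGraph V) (v : V) :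
    (H.neighborSet v).ncard = dg H v := by
  classical
  unfold dg
  rw [← Set.ncard_coe_finset]
  congr 1
  ext u; simp

theorem statement1 (lam : ℝ) (hlam : 1 < lam) :
    ∃ C : ℝ, 1 ≤ C ∧
      ∀ δ : ℝ, 0 < δ → ∃ N : ℕ, ∀ n : ℕ, N ≤ n →
        ∀ (G : SimpleGraph (Fin n)) (d : ℝ),
          (∀ v, d ≤ ((G.neighborSet v).ncard : ℝ) ∧
            ((G.neighborSet v).ncard : ℝ) ≤ lam * d) →
          1 - δ ≤ bernoulliProb n (1 / C)
            {A : Finset (Fin n) | ∃ (H : G.Subgraph) (d' : ℝ),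
              d / C ≤ d' ∧ d' ≤ d ∧ (↑A : Set (Fin n)) ⊆ H.verts ∧
              ∀ v ∈ H.verts,
                d' - 10 ^ 5 * lam ^ 5 * Real.logb 2 n ≤ ((H.neighborSet v).ncard : ℝ) ∧
                ((H.neighborSet v).ncard : ℝ) ≤ d' + 10 ^ 5 * lam ^ 5 * Real.logb 2 n} := by
  classical
  have hlam0 : 0 < lam := by linarith
  have hl : 0 < Real.log lam := Real.log_pos hlam
  have hC1 : 1 ≤ 1000 * lam ^ 9 := by nlinarith [one_le_pow₀ hlam.le (n := 9)]
  refine ⟨1000 * lam ^ 9, hC1, fun δ hδ => ?_⟩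
  obtain ⟨N, hN⟩ := exists_nat_ge (2 + 1/δ + 8 * lam * Real.log lam)
  refine ⟨N, fun n hn G d hG => ?_⟩
  have hnR : 2 + 1/δ + 8 * lam * Real.log lam ≤ (n:ℝ) := hN.trans (by exact_mod_cast hn)
  have hδ' : 0 < 1/δ := by positivity
  have h8 : 0 < 8 * lam * Real.log lam := by positivity
  have hn2 : (2:ℝ) ≤ n := by linarith
  have hnpos : (0:ℝ) < n := by linarith
  have hlogn : 0 < Real.log n := Real.log_pos (by linarith)
  have hlogb : Real.log n ≤ Real.logb 2 n := by
    rw [Real.logb, le_div_iff₀ (Real.log_pos (by norm_num))]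
    nlinarith [Real.log_two_lt_d9]
  simp_rw [ncard_eq_dg] at hG
  have hn0 : 0 < n := by exact_mod_cast hnpos
  have hdn : d ≤ n := by
    refine (hG ⟨0, hn0⟩).1.trans ?_
    have : dg G ⟨0, hn0⟩ ≤ Fintype.card (Fin n) := Finset.card_le_univ _
    rw [Fintype.card_fin] at this
    exact_mod_cast this
  have hd0 : 0 ≤ d := by
    have h1 := (hG ⟨0, hn0⟩).2
    have : (0:ℝ) ≤ dg G ⟨0, hn0⟩ := Nat.cast_nonneg _
    by_contra hc
    push Not at hc
    nlinarith
  set C : ℝ := 1000 * lam ^ 9 with hC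
  have hC0 : 0 < C := by linarith
  set K : ℝ := 10 ^ 5 * lam ^ 5 with hK
  have hK1 : 10^5 ≤ K := by rw [hK]; nlinarith [one_le_pow₀ hlam.le (n := 5)]
  have hKl : 0 ≤ K * Real.logb 2 n := mul_nonneg (by linarith) (by linarith)
  rcases le_or_gt d (C * (K * Real.logb 2 n)) with hsmall | hbig
  · have huniv : {A : Finset (Fin n) | ∃ (H : G.Subgraph) (d' : ℝ),
              d / C ≤ d' ∧ d' ≤ d ∧ (↑A : Set (Fin n)) ⊆ H.verts ∧
              ∀ v ∈ H.verts,
                d' - K * Real.logb 2 n ≤ ((H.neighborSet v).ncard : ℝ) ∧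
                ((H.neighborSet v).ncard : ℝ) ≤ d' + K * Real.logb 2 n} = Set.univ := by
      refine Set.eq_univ_of_forall fun A => ?_
      refine ⟨{ verts := Set.univ, Adj := fun _ _ => False, adj_sub := fun h => h.elim,
                edge_vert := fun h => h.elim, symm := ⟨fun _ _ h => h⟩ }, d / C, le_rfl,
                div_le_self hd0 hC1, Set.subset_univ _, fun v _ => ?_⟩
      have he : (SimpleGraph.Subgraph.neighborSet (G := G) { verts := Set.univ, Adj := fun _ _ => False, adj_sub := fun h => h.elim, edge_vert := fun h => h.elim, symm := ⟨fun _ _ h => h⟩ } v) = ∅ := by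
        ext u; simp [SimpleGraph.Subgraph.neighborSet]
      rw [he, Set.ncard_empty, Nat.cast_zero]
      have h1 : d / C ≤ K * Real.logb 2 n := by
        rw [div_le_iff₀ hC0]; linarith
      have h2 : 0 ≤ d / C := by positivity
      constructor <;> linarith
    rw [huniv]
    unfold bernoulliProb
    simp only [Set.indicator_univ]
    rw [bern_total]; linarith
  · have hd : 0 < d := lt_of_le_of_lt (by positivity) hbig
    set τ : ℝ := d / lam ^ 8 / 40 with hτ
    have hτpos : 0 < τ := by positivity
    have hτlog : 4 * Real.log n ≤ τ := by
      have h1 : 1000 * Real.log n ≤ d / lam ^ 8 := by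
        rw [le_div_iff₀ (by positivity)]
        refine le_trans ?_ hbig.le
        have a1 : Real.log n ≤ K * Real.logb 2 n := by nlinarith
        have a2 : lam ^ 8 ≤ lam ^ 9 := pow_le_pow_right₀ hlam.le (by norm_num)
        have a3 : 0 < lam ^ 8 := by positivity
        calc 1000 * Real.log n * lam ^ 8 = 1000 * lam ^ 8 * Real.log n := by ring
          _ ≤ C * (K * Real.logb 2 n) := by
            rw [hC]; gcongr
      rw [hτ]; linarith
    have hb := bern_bound n (1/C) τ (lam * d) (by positivity) (by rw [div_le_one hC0]; exact hC1)
      (fun v => Finset.univ.filter (fun u => G.Adj v u)) (fun v => (hG v).2)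
      {A : Finset (Fin n) | ∃ (H : G.Subgraph) (d' : ℝ),
              d / C ≤ d' ∧ d' ≤ d ∧ (↑A : Set (Fin n)) ⊆ H.verts ∧
              ∀ v ∈ H.verts,
                d' - K * Real.logb 2 n ≤ ((H.neighborSet v).ncard : ℝ) ∧
                ((H.neighborSet v).ncard : ℝ) ≤ d' + K * Real.logb 2 n} ?_
    · refine le_trans ?_ hb
      have h1 : Real.exp (1/C * (lam * d)) * (2:ℝ) ^ (-τ) ≤ (n:ℝ)⁻¹ ^ 2 := by
        have e1 : 1/C * (lam * d) = τ / 25 := by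
          rw [hC, hτ]; field_simp; ring
        rw [e1, Real.rpow_def_of_pos (by norm_num), ← Real.exp_add]
        have e2 : (n:ℝ)⁻¹ ^ 2 = Real.exp (-(2 * Real.log n)) := by
          rw [Real.exp_neg, mul_comm, Real.exp_mul, Real.exp_log hnpos]
          norm_num
        rw [e2]
        apply Real.exp_le_exp.2
        nlinarith [Real.log_two_gt_d9]
      have h2 : n * (Real.exp (1/C * (lam * d)) * (2:ℝ) ^ (-τ)) ≤ n * (n:ℝ)⁻¹ ^ 2 :=
        mul_le_mul_of_nonneg_left h1 hnpos.le
      have h3 : n * (n:ℝ)⁻¹ ^ 2 = 1 / n := by field_simp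
      have h4 : 1 / (n:ℝ) ≤ δ := by
        rw [div_le_comm₀ hnpos hδ]; linarith
      linarith
    · intro A hA
      obtain ⟨S, H, d', h1, h2, h3, h4, h5, h6⟩ := det A G lam d τ hlam hd hG
        (by rw [hτ]; have : 0 < d / lam ^ 8 := by positivity
            linarith)
        (fun v => by
          refine le_trans (le_of_eq ?_) (hA v)
          congr 2
          ext u; simp [and_comm]) (K * Real.logb 2 n) (by
          rw [Fintype.card_fin]
          have a1 : Real.exp (4 * Real.log n) ≤ Real.exp (K * Real.logb 2 n / 16) :=
            Real.exp_le_exp.2 (by nlinarith)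
          refine le_trans ?_ a1
          rw [mul_comm 4 (Real.log (n:ℝ)), Real.exp_mul, Real.exp_log hnpos]
          have a2 : (n:ℝ) ^ (4:ℝ) = (n:ℝ)^4 := by norm_cast
          rw [a2]
          have a3 : lam * d + n ≤ 2 * (lam * n) := by nlinarith
          have a4 : 4 * Real.log lam * (n * (lam * d + n)) ≤ 4 * Real.log lam * (n * (2 * (lam * n))) := by
            gcongr
          have a5 : (8 * lam * Real.log lam + 2) * (n:ℝ)^2 ≤ n * n^2 := by
            gcongr; linarith
          nlinarith [pow_pos hnpos 3, pow_pos hnpos 2])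
      refine ⟨{ verts := S, Adj := H.Adj, adj_sub := fun h => h1 h,
                edge_vert := fun h => h3 _ _ h, symm := H.symm }, d', ?_, h5, ?_, ?_⟩
      · refine le_trans ?_ h4
        apply div_le_div_of_nonneg_left hd0 (by positivity)
        rw [hC]
        have a2 : lam ^ 8 ≤ lam ^ 9 := pow_le_pow_right₀ hlam.le (by norm_num)
        have a3 : 0 < lam ^ 9 := by positivity
        linarith
      · exact_mod_cast h2
      · intro v hv
        have := h6 v hv
        rw [← ncard_eq_dg] at this
        exact this
end

section
/- Let n be a sufficiently large integer and let 0 < ε < 2^{-3}. Let G be an n-vertex graph with average degree d(G) ≥ (log n)^4. Then G contains an 18-almost-regular bipartite subgraph G' with average degree d(G') ≥ d(G)/(400·log n) which is an (ε,s)-expander for some s ≥ d(G')/(log |V(G')|)^2. -/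
/-- The external neighbourhood of a vertex set `U` in a graph `G`. -/
def extNbhd {α : Type*} (G : SimpleGraph α) (U : Set α) : Set α :=
  {v | v ∉ U ∧ ∃ u ∈ U, G.Adj u v}

/-- `G`, regarded as an `n`-vertex graph, is an `(ε, s)`-expander: for every vertex set `U`
and edge set `F ⊆ E(G)` with `1 ≤ |U| ≤ (2/3)n` and `|F| ≤ s|U|`, the external
neighbourhood of `U` in `G - F` has size at least `ε|U|/(log n)^2`. -/
def IsExpander {α : Type*} (n : ℕ) (G : SimpleGraph α) (ε s : ℝ) : Prop :=
  ∀ (U : Set α) (F : Set (Sym2 α)), F ⊆ G.edgeSet →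
    1 ≤ U.ncard → (U.ncard : ℝ) ≤ 2 / 3 * n → (F.ncard : ℝ) ≤ s * U.ncard →
    ε * U.ncard / Real.logb 2 n ^ 2 ≤ ((extNbhd (G.deleteEdges F) U).ncard : ℝ)


open Classical in
lemma pyber_chain {α : Type*} (k : ℕ) : ∀ (A B : Finset α) (r : α → α → Prop),
    B.Nonempty → A.card ≤ B.card → (∀ b ∈ B, k ≤ (A.filter (r b)).card) →
    ∃ (As Bs : ℕ → Finset α) (f : ℕ → α → α),
      (∀ i, As i ⊆ A ∧ Bs i ⊆ B ∧ (Bs i).Nonempty ∧ (As i).card ≤ (Bs i).card) ∧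
      Antitone As ∧ Antitone Bs ∧
      (∀ i < k, Set.InjOn (f i) (Bs i : Set α) ∧ ∀ b ∈ Bs i, f i b ∈ As i ∧ r b (f i b)) ∧
      (∀ i < k, ∀ j < k, ∀ b ∈ Bs i, b ∈ Bs j → f i b = f j b → i = j) := by
  induction k with
  | zero =>
    intro A B r hB hAB _
    exact ⟨fun _ => A, fun _ => B, fun _ => id, fun i => ⟨subset_rfl, subset_rfl, hB, hAB⟩,
      antitone_const, antitone_const, by simp, by simp⟩
  | succ k ih =>
    intro A B r hB hAB hdeg
    let N : Finset α → Finset α := fun S => S.biUnion (fun b => A.filter (r b))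
    have hNA : ∀ S, N S ⊆ A := by
      intro S x hx
      simp only [N, Finset.mem_biUnion, Finset.mem_filter] at hx
      obtain ⟨_, _, h, _⟩ := hx; exact h
    have hNmono : ∀ S T, S ⊆ T → N S ⊆ N T := fun S T h => Finset.biUnion_subset_biUnion_of_subset_left _ h
    let fam := B.powerset.filter (fun S => S.Nonempty ∧ (N S).card ≤ S.card)
    have hfam : fam.Nonempty := ⟨B, by
      simp only [fam, Finset.mem_filter, Finset.mem_powerset]
      exact ⟨subset_rfl, hB, (Finset.card_le_card (hNA B)).trans hAB⟩⟩
    obtain ⟨B1, hB1, hmin⟩ := Finset.exists_min_image fam Finset.card hfam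
    simp only [fam, Finset.mem_filter, Finset.mem_powerset] at hB1 hmin
    obtain ⟨hB1B, hB1ne, hB1N⟩ := hB1
    have hall : ∀ S ⊆ B1, S.card ≤ (N S).card := by
      intro S hS
      by_contra! hlt
      have hSne : S.Nonempty := by
        rw [← Finset.card_pos]; omega
      have h1 := hmin S ⟨hS.trans hB1B, hSne, hlt.le⟩
      have hEq : S = B1 := Finset.eq_of_subset_of_card_le hS h1
      subst hEq
      -- remove a vertex
      obtain ⟨v, hv⟩ := hSne
      have hvpos : 0 < (N S).card := by
        have := hdeg v (hB1B hv)
        have h2 : (A.filter (r v)).card ≤ (N S).card :=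
          Finset.card_le_card (Finset.subset_biUnion_of_mem (fun b => A.filter (r b)) hv)
        omega
      have hc : (S.erase v).card = S.card - 1 := Finset.card_erase_of_mem hv
      have h3 := hmin (S.erase v) ⟨(Finset.erase_subset _ _).trans hB1B, by
        rw [← Finset.card_pos]; omega, by
        have := Finset.card_le_card (hNmono _ _ (Finset.erase_subset v S))
        omega⟩
      omega
    obtain ⟨g, hginj, hg⟩ := (Finset.all_card_le_biUnion_card_iff_exists_injective
      (fun b : B1 => A.filter (r b))).1 (by
        intro s
        have h := hall (s.map (Function.Embedding.subtype _)) (by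
          intro x hx
          simp only [Finset.mem_map, Function.Embedding.subtype_apply] at hx
          obtain ⟨y, _, rfl⟩ := hx; exact y.2)
        rw [Finset.card_map] at h
        refine h.trans (Finset.card_le_card ?_)
        intro x hx
        simp only [N, Finset.mem_biUnion, Finset.mem_map, Function.Embedding.subtype_apply] at hx ⊢
        obtain ⟨_, ⟨y, hy, rfl⟩, hx⟩ := hx
        exact ⟨y, hy, hx⟩)
    let f0 : α → α := fun x => if h : x ∈ B1 then g ⟨x, h⟩ else x
    have hf0 : ∀ b (h : b ∈ B1), f0 b = g ⟨b, h⟩ := fun b h => by simp [f0, h]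
    have hf0r : ∀ b ∈ B1, f0 b ∈ N B1 ∧ r b (f0 b) := by
      intro b hb
      have := hg ⟨b, hb⟩
      rw [← hf0 b hb] at this
      refine ⟨Finset.mem_biUnion.2 ⟨b, hb, this⟩, (Finset.mem_filter.1 this).2⟩
    obtain ⟨As, Bs, f, h1, h2, h3, h4, h5⟩ := ih (N B1) B1 (fun b a => r b a ∧ a ≠ f0 b) hB1ne hB1N (by
      intro b hb
      have h := hdeg b (hB1B hb)
      have hsub : (A.filter (r b)).erase (f0 b) ⊆ (N B1).filter (fun a => r b a ∧ a ≠ f0 b) := by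
        intro a ha
        rw [Finset.mem_erase] at ha
        rw [Finset.mem_filter]
        exact ⟨Finset.mem_biUnion.2 ⟨b, hb, ha.2⟩, (Finset.mem_filter.1 ha.2).2, ha.1⟩
      have h6 := Finset.card_le_card hsub
      have h7 := Finset.pred_card_le_card_erase (s := A.filter (r b)) (a := f0 b)
      have h8 : k ≤ (A.filter (r b)).card - 1 := by omega
      refine (h8.trans h7).trans (h6.trans (le_of_eq ?_))
      congr!)
    refine ⟨fun i => Nat.casesOn i (N B1) As, fun i => Nat.casesOn i B1 Bs,
      fun i => Nat.casesOn i f0 f, ?_, ?_, ?_, ?_, ?_⟩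
    · rintro (_ | i)
      · exact ⟨hNA _, hB1B, hB1ne, hB1N⟩
      · obtain ⟨a, b, c, d⟩ := h1 i
        exact ⟨a.trans (hNA _), b.trans hB1B, c, d⟩
    · apply antitone_nat_of_succ_le
      rintro (_ | i)
      · exact (h1 0).1
      · exact h2 (Nat.le_succ i)
    · apply antitone_nat_of_succ_le
      rintro (_ | i)
      · exact (h1 0).2.1
      · exact h3 (Nat.le_succ i)
    · rintro (_ | i) hi
      · refine ⟨?_, hf0r⟩
        intro x hx y hy hxy
        have hx' : x ∈ B1 := hx
        have hy' : y ∈ B1 := hy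
        have hxy' : f0 x = f0 y := hxy
        rw [hf0 x hx', hf0 y hy'] at hxy'
        simpa using hginj hxy'
      · obtain ⟨a, b⟩ := h4 i (by omega)
        exact ⟨a, fun x hx => ⟨(b x hx).1, (b x hx).2.1⟩⟩
    · rintro (_ | i) hi (_ | j) hj b hbi hbj he
      · rfl
      · exact absurd he.symm ((h4 j (by omega)).2 b hbj).2.2
      · exact absurd he ((h4 i (by omega)).2 b hbi).2.2
      · rw [h5 i (by omega) j (by omega) b hbi hbj he]

lemma block_exists (b : ℕ → ℕ) (t J n : ℕ) (hb : ∀ i, 0 < b i) (h0 : b 0 ≤ n) (hJ : n < 2 ^ J) :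
    ∃ j < J, b (j * t) ≤ 2 * b ((j + 1) * t) := by
  by_contra! h
  have key : ∀ j ≤ J, 2 ^ j * b (j * t) ≤ b 0 := by
    intro j
    induction j with
    | zero => simp
    | succ j ih =>
      intro hj
      have h1 := ih (by omega)
      have h2 := h j (by omega)
      calc 2 ^ (j+1) * b ((j+1)*t) = 2 ^ j * (2 * b ((j+1)*t)) := by ring
        _ ≤ 2 ^ j * b (j * t) := Nat.mul_le_mul_left _ h2.le
        _ ≤ b 0 := h1
  have h1 := key J le_rfl
  have h2 : 2 ^ J * 1 ≤ 2 ^ J * b (J * t) := Nat.mul_le_mul_left _ (hb _)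
  omega

/-- number of edges inside W -/
noncomputable def eIn {V : Type*} (G : SimpleGraph V) (W : Finset V) : ℕ :=
  {e ∈ G.edgeSet | ∀ v ∈ e, v ∈ W}.ncard

lemma exists_opt {V : Type*} [Finite V] [Nonempty V] (G : SimpleGraph V) (f : ℕ → ℝ)
    (hf : ∀ m, 0 < f m) :
    ∃ (W : Finset V) (l : ℝ), W.Nonempty ∧ 0 ≤ l ∧ (eIn G W : ℝ) = l * (W.card * f W.card) ∧
      ∀ W' : Finset V, (eIn G W' : ℝ) ≤ l * (W'.card * f W'.card) := by
  classical
  have := Fintype.ofFinite V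
  obtain ⟨v⟩ := ‹Nonempty V›
  obtain ⟨W, hW, hmax⟩ := Finset.exists_max_image
    (Finset.univ.filter (fun W : Finset V => W.Nonempty))
    (fun W => (eIn G W : ℝ) / (W.card * f W.card)) ⟨{v}, by simp⟩
  simp only [Finset.mem_filter, Finset.mem_univ, true_and] at hW hmax
  have hpos : ∀ W : Finset V, W.Nonempty → 0 < W.card * f W.card := fun W hW =>
    mul_pos (by exact_mod_cast hW.card_pos) (hf _)
  refine ⟨W, _, hW, ?_, (div_mul_cancel₀ _ (hpos W hW).ne').symm, ?_⟩
  · exact div_nonneg (Nat.cast_nonneg _) (hpos W hW).le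
  · intro W'
    rcases W'.eq_empty_or_nonempty with rfl | h
    · have : eIn G ∅ = 0 := by
        have h0 : {e ∈ G.edgeSet | ∀ v ∈ e, v ∈ (∅ : Finset V)} = ∅ := by
          ext e
          induction e with | _ a b => simp only [Finset.notMem_empty, Set.mem_empty_iff_false, iff_false]; exact fun h => h.2 a (by simp)
        rw [eIn, h0, Set.ncard_empty]
      simp [this]
    · rw [← div_le_iff₀ (hpos W' h)]
      exact hmax W' h

lemma eIn_erase {V : Type*} [Finite V] [DecidableEq V] (G : SimpleGraph V) (W : Finset V) (v : V) :
    eIn G W ≤ eIn G (W.erase v) + {w | w ∈ W ∧ G.Adj v w}.ncard := by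
  have h : {e ∈ G.edgeSet | ∀ v ∈ e, v ∈ W} ⊆ {e ∈ G.edgeSet | ∀ u ∈ e, u ∈ W.erase v} ∪
      (fun w => s(v, w)) '' {w | w ∈ W ∧ G.Adj v w} := by
    intro e
    induction e with | _ a b =>
    rintro ⟨h1, h2⟩
    simp only [Sym2.mem_iff, forall_eq_or_imp, forall_eq] at h2
    simp only [SimpleGraph.mem_edgeSet] at h1
    by_cases ha : a = v
    · subst ha; right; exact ⟨b, ⟨h2.2, h1⟩, rfl⟩
    by_cases hb : b = v
    · subst hb; right; exact ⟨a, ⟨h2.1, h1.symm⟩, Sym2.eq_swap⟩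
    left
    simp [h1, ha, hb, h2]
  calc _ ≤ _ := Set.ncard_le_ncard h (Set.toFinite _)
    _ ≤ _ := Set.ncard_union_le _ _
    _ ≤ _ := Nat.add_le_add_left (Set.ncard_image_le (Set.toFinite _)) _

lemma opt_min_deg {V : Type*} [Finite V] (G : SimpleGraph V) (f : ℕ → ℝ)
    (hm : Monotone f) (W : Finset V) (l : ℝ) (hl : 0 ≤ l)
    (h1 : (eIn G W : ℝ) = l * (W.card * f W.card))
    (h2 : ∀ W' : Finset V, (eIn G W' : ℝ) ≤ l * (W'.card * f W'.card)) (v : V) (hv : v ∈ W) :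
    l * f W.card ≤ ({w | w ∈ W ∧ G.Adj v w}.ncard : ℝ) := by
  classical
  have a := eIn_erase G W v
  have b := h2 (W.erase v)
  have hc : ((W.erase v).card : ℝ) = W.card - 1 := by
    rw [Finset.card_erase_of_mem hv, Nat.cast_sub (Finset.card_pos.2 ⟨v, hv⟩)]; simp
  have hfm : f (W.erase v).card ≤ f W.card := hm (Finset.card_le_card (Finset.erase_subset _ _))
  have a' : (eIn G W : ℝ) ≤ eIn G (W.erase v) + ({w | w ∈ W ∧ G.Adj v w}.ncard : ℝ) := by
    exact_mod_cast a
  have h3 : l * ((W.erase v).card * f (W.erase v).card) ≤ l * ((W.erase v).card * f W.card) := by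
    gcongr
  rw [hc] at h3
  rw [hc] at b
  nlinarith

lemma exists_cut {V : Type*} [Finite V] (G : SimpleGraph V) :
    ∃ (c : V → Bool) (G1 : SimpleGraph V), G1 ≤ G ∧ (∀ u v, G1.Adj u v → c u ≠ c v) ∧
      G.edgeSet.ncard ≤ 2 * G1.edgeSet.ncard := by
  classical
  have := Fintype.ofFinite V
  let cut : (V → Bool) → SimpleGraph V := fun c =>
    { Adj := fun u v => G.Adj u v ∧ c u ≠ c v
      symm := ⟨fun u v h => ⟨h.1.symm, h.2.symm⟩⟩
      loopless := ⟨fun u h => h.2 rfl⟩ }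
  by_contra! hcon
  have h1 : ∀ c, 2 * (G.edgeFinset.filter (fun e => e ∈ (cut c).edgeSet)).card < G.edgeFinset.card := by
    intro c
    have := hcon c (cut c) (fun u v h => h.1) (fun u v h => h.2)
    have e1 : ((G.edgeFinset.filter (fun e => e ∈ (cut c).edgeSet) : Finset (Sym2 V)) : Set (Sym2 V))
        = (cut c).edgeSet := by
      ext e
      induction e with | _ a b =>
      simp [cut]
    rw [← Set.ncard_coe_finset, ← Set.ncard_coe_finset, e1, SimpleGraph.coe_edgeFinset]
    exact this
  have hsum : ∑ c : V → Bool, 2 * (G.edgeFinset.filter (fun e => e ∈ (cut c).edgeSet)).card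
      < ∑ c : V → Bool, G.edgeFinset.card :=
    Finset.sum_lt_sum_of_nonempty Finset.univ_nonempty (fun c _ => h1 c)
  rw [← Finset.mul_sum] at hsum
  have hdc : ∑ c : V → Bool, (G.edgeFinset.filter (fun e => e ∈ (cut c).edgeSet)).card =
      ∑ e ∈ G.edgeFinset, ((Finset.univ : Finset (V → Bool)).filter (fun c => e ∈ (cut c).edgeSet)).card :=
    Finset.sum_card_bipartiteAbove_eq_sum_card_bipartiteBelow (s := Finset.univ) (t := G.edgeFinset)
      (fun c e => e ∈ (cut c).edgeSet)
  rw [hdc, Finset.mul_sum] at hsum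
  have hhalf : ∀ e ∈ G.edgeFinset, Fintype.card (V → Bool) ≤
      2 * ((Finset.univ : Finset (V → Bool)).filter (fun c => e ∈ (cut c).edgeSet)).card := by
    intro e
    induction e with | _ a b =>
    intro he
    have hab : G.Adj a b := by simpa using he
    have hsplit := Finset.card_filter_add_card_filter_not (s := (Finset.univ : Finset (V → Bool)))
      (fun c => s(a,b) ∈ (cut c).edgeSet)
    have hle : ((Finset.univ : Finset (V → Bool)).filter (fun c => ¬ s(a,b) ∈ (cut c).edgeSet)).card ≤
      ((Finset.univ : Finset (V → Bool)).filter (fun c => s(a,b) ∈ (cut c).edgeSet)).card := by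
      apply Finset.card_le_card_of_injOn (fun c => Function.update c a (!c a))
      · intro c hc
        simp [cut, hab, hab.ne'] at hc ⊢
        simp [hc]
      · intro c _ c' _ h
        have h' : Function.update c a (!c a) = Function.update c' a (!c' a) := h
        ext x
        have hx := congrFun h' x
        by_cases hxa : x = a
        · subst hxa; simpa using hx
        · simpa [hxa] using hx
    rw [Finset.card_univ] at hsplit
    omega
  have := Finset.sum_le_sum hhalf
  simp only [Finset.sum_const, Finset.card_univ, smul_eq_mul] at this hsum
  rw [mul_comm] at this
  omega

/-- subgraph of G induced by W in G0 -/
def indSub {V : Type*} (G G0 : SimpleGraph V) (h : G0 ≤ G) (W : Finset V) : G.Subgraph where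
  verts := W
  Adj u v := u ∈ W ∧ v ∈ W ∧ G0.Adj u v
  adj_sub := fun h' => h h'.2.2
  edge_vert := fun h' => h'.1
  symm := ⟨fun _ _ h' => ⟨h'.2.1, h'.1, h'.2.2.symm⟩⟩

lemma eIn_split {V : Type*} [Finite V] [DecidableEq V] (G : SimpleGraph V) (W U N : Finset V)
    (F : Set (Sym2 V)) (hN : ∀ u ∈ U, ∀ w ∈ W, w ∉ U → G.Adj u w → s(u, w) ∉ F → w ∈ N) :
    eIn G W ≤ eIn G (U ∪ N) + eIn G (W \ U) + F.ncard := by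
  have h : {e ∈ G.edgeSet | ∀ v ∈ e, v ∈ W} ⊆ ({e ∈ G.edgeSet | ∀ v ∈ e, v ∈ U ∪ N} ∪
      {e ∈ G.edgeSet | ∀ v ∈ e, v ∈ W \ U}) ∪ F := by
    intro e
    induction e with | _ a b =>
    rintro ⟨h1, h2⟩
    simp only [Sym2.mem_iff, forall_eq_or_imp, forall_eq] at h2
    simp only [SimpleGraph.mem_edgeSet] at h1
    by_cases hF : s(a, b) ∈ F
    · right; exact hF
    left
    simp only [Set.mem_union, Set.mem_ofPred_eq, SimpleGraph.mem_edgeSet, Sym2.mem_iff,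
      forall_eq_or_imp, forall_eq, Finset.mem_union, Finset.mem_sdiff]
    have ha := hN a
    have hb := hN b
    have hF' : s(b, a) ∉ F := by rwa [Sym2.eq_swap]
    have h1' := h1.symm
    by_cases haU : a ∈ U <;> by_cases hbU : b ∈ U
    · simp [*]
    · left; exact ⟨h1, Or.inl haU, Or.inr (ha haU b h2.2 hbU h1 hF)⟩
    · left; exact ⟨h1, Or.inr (hb hbU a h2.1 haU h1' hF'), Or.inl hbU⟩
    · simp [*]
  calc _ ≤ _ := Set.ncard_le_ncard h (Set.toFinite _)
    _ ≤ _ := Set.ncard_union_le _ _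
    _ ≤ _ := Nat.add_le_add_right (Set.ncard_union_le _ _) _

noncomputable def fex (m : ℕ) : ℝ := 1 - 8 / (16 + Real.logb 2 m)

lemma logb_nat_nonneg (m : ℕ) : 0 ≤ Real.logb 2 m := by
  rcases Nat.eq_zero_or_pos m with rfl | h
  · simp
  · exact Real.logb_nonneg (by norm_num) (by exact_mod_cast h)

lemma fex_mono : Monotone fex := by
  intro a b hab
  unfold fex
  have h : Real.logb 2 a ≤ Real.logb 2 b := by
    rcases Nat.eq_zero_or_pos a with rfl | h
    · simpa using logb_nat_nonneg b
    · exact Real.logb_le_logb_of_le (by norm_num) (by exact_mod_cast h) (by exact_mod_cast hab)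
  have := logb_nat_nonneg a
  gcongr

lemma fex_half (m : ℕ) : 1 / 2 ≤ fex m := by
  have := logb_nat_nonneg m
  have h : 8 / (16 + Real.logb 2 m) ≤ 8 / 16 := by gcongr; linarith
  unfold fex
  linarith

lemma fex_le (m : ℕ) : fex m ≤ 1 := by
  have := logb_nat_nonneg m
  have h : 0 ≤ 8 / (16 + Real.logb 2 m) := by positivity
  unfold fex
  linarith

lemma fex_gap (m a' : ℕ) (ε : ℝ) (he0 : 0 < ε) (he : ε < 1 / 8) (hL : 100 ≤ Real.logb 2 m)
    (ha : 1 ≤ a') (ha' : (a' : ℝ) ≤ 3 / 4 * m) :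
    (1 + ε / Real.logb 2 m ^ 2) * fex a' + 2 * fex m / Real.logb 2 m ^ 2 < fex m := by
  set L := Real.logb 2 m with hLdef
  have hmpos : (0 : ℝ) < m := by
    have : (1 : ℝ) ≤ a' := by exact_mod_cast ha
    linarith
  have hapos : (0 : ℝ) < a' := by exact_mod_cast ha
  have hlog : Real.logb 2 a' ≤ L - 2 / 5 := by
    have h1 : Real.logb 2 a' ≤ Real.logb 2 (3 / 4 * m) :=
      Real.logb_le_logb_of_le (by norm_num) hapos ha'
    have h2 : Real.logb 2 (3 / 4 * m) = Real.logb 2 (3 / 4) + L :=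
      Real.logb_mul (by norm_num) hmpos.ne'
    have h3 : Real.logb 2 (3 / 4 : ℝ) ≤ - (2 / 5) := by
      have h4 : (5 : ℝ) * Real.logb 2 (3 / 4 : ℝ) = Real.logb 2 ((3 / 4 : ℝ) ^ 5) := by
        rw [Real.logb_pow]; norm_num
      have h5 : Real.logb 2 ((3 / 4 : ℝ) ^ 5) ≤ Real.logb 2 ((2 : ℝ) ^ (-2 : ℝ)) :=
        Real.logb_le_logb_of_le (by norm_num) (by positivity) (by norm_num [Real.rpow_neg])
      rw [Real.logb_rpow (by norm_num) (by norm_num)] at h5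
      linarith
    linarith
  have hl0 := logb_nat_nonneg a'
  have hfa : fex a' ≤ 1 - 8 / (16 + (L - 2 / 5)) := by
    unfold fex
    gcongr
  have hfm : fex m = 1 - 8 / (16 + L) := rfl
  have hgap : 16 / 5 / (16 + L) ^ 2 ≤ fex m - fex a' := by
    have : 16 / 5 / (16 + L) ^ 2 ≤ 8 / (16 + (L - 2 / 5)) - 8 / (16 + L) := by
      rw [div_sub_div _ _ (by linarith) (by linarith), div_le_div_iff₀ (by positivity) (by nlinarith)]
      nlinarith
    linarith
  have hq : (17 / 8) / L ^ 2 < 16 / 5 / (16 + L) ^ 2 := by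
    rw [div_lt_div_iff₀ (by positivity) (by positivity)]
    nlinarith
  have hL2 : (0 : ℝ) < L ^ 2 := by positivity
  have e1 : ε / L ^ 2 * fex a' ≤ (1 / 8) / L ^ 2 := by
    have h1 : ε / L ^ 2 ≤ (1 / 8) / L ^ 2 := by gcongr
    have h2 := fex_le a'
    have h3 := fex_half a'
    have h4 : 0 ≤ ε / L ^ 2 := by positivity
    nlinarith
  have e2 : 2 * fex m / L ^ 2 ≤ 2 / L ^ 2 := by
    have := fex_le m
    gcongr; linarith
  have e3 : (17 / 8) / L ^ 2 = (1 / 8) / L ^ 2 + 2 / L ^ 2 := by ring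
  linarith

lemma expander_of_opt {V : Type*} [Finite V] (G G0 : SimpleGraph V) (h0 : G0 ≤ G)
    (W : Finset V) (l : ℝ) (hl : 0 < l) (ε : ℝ) (he0 : 0 < ε) (he : ε < 1 / 8)
    (hL : 100 ≤ Real.logb 2 W.card)
    (h1 : (eIn G0 W : ℝ) = l * (W.card * fex W.card))
    (h2 : ∀ W' : Finset V, (eIn G0 W' : ℝ) ≤ l * (W'.card * fex W'.card)) :
    IsExpander W.card (indSub G G0 h0 W).coe ε (2 * l * fex W.card / Real.logb 2 W.card ^ 2) := by
  classical
  set H := indSub G G0 h0 W with hH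
  intro U F hF hU1 hU2 hFs
  by_contra! hlt
  set N := extNbhd (H.coe.deleteEdges F) U with hN
  set m := W.card with hm
  set L := Real.logb 2 m with hLd
  let val : H.verts → V := Subtype.val
  have hval : Function.Injective val := Subtype.val_injective
  let U' : Finset V := (Set.toFinite (val '' U)).toFinset
  let N' : Finset V := (Set.toFinite (val '' N)).toFinset
  let F' : Set (Sym2 V) := Sym2.map val '' F
  have cU : U'.card = U.ncard := by
    rw [← Set.ncard_eq_toFinset_card, Set.ncard_image_of_injective _ hval]
  have cN : N'.card = N.ncard := by
    rw [← Set.ncard_eq_toFinset_card, Set.ncard_image_of_injective _ hval]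
  have cF : F'.ncard = F.ncard := Set.ncard_image_of_injective _ (Sym2.map.injective hval)
  have hUW : U' ⊆ W := by
    intro x hx
    simp only [U', Set.Finite.mem_toFinset, Set.mem_image] at hx
    obtain ⟨y, _, rfl⟩ := hx
    exact y.2
  have hsp := eIn_split G0 W U' N' F' (by
    intro u hu w hw hwU hadj hF'
    simp only [U', Set.Finite.mem_toFinset, Set.mem_image] at hu
    obtain ⟨x, hxU, rfl⟩ := hu
    have hxW : val x ∈ W := x.2
    let y : H.verts := ⟨w, hw⟩
    simp only [N', Set.Finite.mem_toFinset]
    refine ⟨y, ⟨?_, x, hxU, ?_⟩, rfl⟩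
    · intro hy
      apply hwU
      simp only [U', Set.Finite.mem_toFinset]
      exact ⟨y, hy, rfl⟩
    · rw [SimpleGraph.deleteEdges_adj]
      refine ⟨⟨hxW, hw, hadj⟩, fun hxy => hF' ⟨_, hxy, rfl⟩⟩)
  have hspR : (eIn G0 W : ℝ) ≤ eIn G0 (U' ∪ N') + eIn G0 (W \ U') + F'.ncard := by
    exact_mod_cast hsp
  have hA := h2 (U' ∪ N')
  have hB := h2 (W \ U')
  have hcB : ((W \ U').card : ℝ) = m - U'.card := by
    rw [Finset.card_sdiff_of_subset hUW, Nat.cast_sub (Finset.card_le_card hUW)]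
  have hfB : fex (W \ U').card ≤ fex m := fex_mono (Finset.card_le_card Finset.sdiff_subset)
  set a : ℝ := (U'.card : ℝ) with ha
  rw [← cU] at hU1 hU2 hFs hlt
  rw [← cN] at hlt
  rw [← cF] at hFs
  have ha1 : (1 : ℝ) ≤ a := by rw [ha]; exact_mod_cast hU1
  have hLpos : (0:ℝ) < L ^ 2 := by positivity
  have ha'N : (U' ∪ N').card ≤ U'.card + N'.card := Finset.card_union_le _ _
  set a' := (U' ∪ N').card with ha'
  have ha'R : (a' : ℝ) ≤ a * (1 + ε / L ^ 2) := by
    have : (a' : ℝ) ≤ a + N'.card := by rw [ha]; exact_mod_cast ha'N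
    have e : ε * a / L ^ 2 = a * (ε / L ^ 2) := by ring
    rw [e] at hlt
    linarith
  have hsmall : ε / L ^ 2 ≤ 1 / 80 := by
    rw [div_le_div_iff₀ hLpos (by norm_num)]
    nlinarith
  have hepos : 0 < ε / L ^ 2 := by positivity
  have hm0 : (0:ℝ) ≤ m := Nat.cast_nonneg _
  have ha'34 : (a' : ℝ) ≤ 3 / 4 * m := by nlinarith
  have ha'1 : 1 ≤ a' := hU1.trans (Finset.card_le_card Finset.subset_union_left)
  have hgap := fex_gap m a' ε he0 he hL ha'1 ha'34
  rw [← hLd] at hgap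
  have hfa := fex_half a'
  have hBB : l * ((W \ U').card * fex (W \ U').card) ≤ l * ((m - a) * fex m) := by
    rw [← hcB]; gcongr
  have hAA : l * (a' * fex a') ≤ l * (a * (1 + ε / L ^ 2) * fex a') := by gcongr
  have hFF : (F'.ncard : ℝ) ≤ l * a * (2 * fex m / L ^ 2) := by
    calc _ ≤ _ := hFs
      _ = _ := by ring
  have hla : 0 < l * a := by positivity
  have := mul_lt_mul_of_pos_left hgap hla
  nlinarith


lemma exists_almost_reg {V : Type*} [Finite V] (G1 : SimpleGraph V) (c : V → Bool)
    (hc : ∀ u v, G1.Adj u v → c u ≠ c v) (W : Finset V) (hW : W.Nonempty) (k t J : ℕ)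
    (hk : ∀ v ∈ W, k ≤ {w | w ∈ W ∧ G1.Adj v w}.ncard) (hJ : Nat.card V < 2 ^ J)
    (hkJ : J * t ≤ k) :
    ∃ (G0 : SimpleGraph V) (W0 : Finset V), G0 ≤ G1 ∧ W0.Nonempty ∧
      (∀ v, (G0.neighborSet v).ncard ≤ t) ∧ t * W0.card ≤ 4 * eIn G0 W0 := by
  classical
  obtain ⟨p, hp⟩ : ∃ p : Bool, (W.filter (fun v => c v ≠ p)).card ≤ (W.filter (fun v => c v = p)).card := by
    rcases le_total (W.filter (fun v => c v = true)).card (W.filter (fun v => c v = false)).card with h | h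
    · exact ⟨false, by simpa using h⟩
    · exact ⟨true, by simpa using h⟩
  set A := W.filter (fun v => c v ≠ p) with hA
  set B := W.filter (fun v => c v = p) with hB
  have hABc : A.card + B.card = W.card := by
    rw [add_comm]; exact Finset.card_filter_add_card_filter_not _
  have hBne : B.Nonempty := by
    have := hW.card_pos
    rw [← Finset.card_pos]; omega
  obtain ⟨As, Bs, f, h1, hAm, hBm, h4, h5⟩ := pyber_chain k A B G1.Adj hBne hp (by
    intro b hb
    rw [hB, Finset.mem_filter] at hb
    refine (hk b hb.1).trans ?_
    rw [← Set.ncard_coe_finset]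
    apply Set.ncard_le_ncard _ (Set.toFinite _)
    rintro w ⟨hw, hadj⟩
    have := hc _ _ hadj
    simp only [hA, Finset.coe_filter, Finset.mem_filter]
    refine ⟨⟨hw, fun h => this (by rw [hb.2, h])⟩, hadj⟩)
  obtain ⟨j, hjJ, hj⟩ := block_exists (fun i => (Bs i).card) t J (Nat.card V)
    (fun i => (h1 i).2.2.1.card_pos) (by
      rw [← Set.ncard_coe_finset, ← Set.ncard_univ]
      exact Set.ncard_le_ncard (Set.subset_univ _) (Set.toFinite _)) hJ
  set S := Finset.Ico (j * t) ((j + 1) * t) with hS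
  have hScard : S.card = t := by
    rw [hS, Nat.card_Ico, Nat.add_mul]; omega
  have hSk : ∀ i ∈ S, i < k := by
    intro i hi
    rw [hS, Finset.mem_Ico] at hi
    have : (j + 1) * t ≤ J * t := Nat.mul_le_mul_right _ hjJ
    omega
  have cB : ∀ i, ∀ b ∈ Bs i, c b = p := fun i b hb => (Finset.mem_filter.1 ((h1 i).2.1 hb)).2
  have cA : ∀ i, ∀ b ∈ As i, c b ≠ p := fun i b hb => (Finset.mem_filter.1 ((h1 i).1 hb)).2
  have hadj1 : ∀ u v, (∃ i ∈ S, (u ∈ Bs i ∧ v = f i u) ∨ (v ∈ Bs i ∧ u = f i v)) → G1.Adj u v := by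
    rintro u v ⟨i, hi, ⟨hu, rfl⟩ | ⟨hv, rfl⟩⟩
    · exact ((h4 i (hSk i hi)).2 u hu).2
    · exact ((h4 i (hSk i hi)).2 v hv).2.symm
  let G0 : SimpleGraph V :=
    { Adj := fun u v => ∃ i ∈ S, (u ∈ Bs i ∧ v = f i u) ∨ (v ∈ Bs i ∧ u = f i v)
      symm := ⟨by rintro u v ⟨i, hi, h⟩; exact ⟨i, hi, h.symm⟩⟩
      loopless := ⟨fun u h => G1.loopless.irrefl u (hadj1 u u h)⟩ }
  refine ⟨G0, As (j * t) ∪ Bs (j * t), fun u v h => hadj1 u v h,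
    (h1 (j * t)).2.2.1.mono Finset.subset_union_right, ?_, ?_⟩
  · intro v
    by_cases hv : c v = p
    · have hsub : G0.neighborSet v ⊆ ((S.image (fun i => f i v) : Finset V) : Set V) := by
        rintro w ⟨i, hi, ⟨hu, rfl⟩ | ⟨hw, rfl⟩⟩
        · exact Finset.mem_coe.2 (Finset.mem_image.2 ⟨i, hi, rfl⟩)
        · exact absurd hv (cA i _ ((h4 i (hSk i hi)).2 w hw).1)
      calc _ ≤ _ := Set.ncard_le_ncard hsub (Set.toFinite _)
        _ = _ := Set.ncard_coe_finset _
        _ ≤ _ := Finset.card_image_le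
        _ = t := hScard
    · have hsub : G0.neighborSet v ⊆
          ((S.biUnion (fun i => (Bs i).filter (fun u => f i u = v)) : Finset V) : Set V) := by
        rintro w ⟨i, hi, ⟨hu, rfl⟩ | ⟨hw, rfl⟩⟩
        · exact absurd (cB i v hu) hv
        · exact Finset.mem_coe.2 (Finset.mem_biUnion.2 ⟨i, hi, Finset.mem_filter.2 ⟨hw, rfl⟩⟩)
      calc _ ≤ _ := Set.ncard_le_ncard hsub (Set.toFinite _)
        _ = _ := Set.ncard_coe_finset _
        _ ≤ S.card * 1 := by
          apply Finset.card_biUnion_le_card_mul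
          intro i hi
          rw [Finset.card_le_one]
          intro x hx y hy
          rw [Finset.mem_filter] at hx hy
          exact (h4 i (hSk i hi)).1 (Finset.mem_coe.2 hx.1) (Finset.mem_coe.2 hy.1) (hx.2.trans hy.2.symm)
        _ = t := by rw [hScard, mul_one]
  · have hW0 : (As (j * t) ∪ Bs (j * t)).card ≤ 2 * (Bs (j * t)).card := by
      have := Finset.card_union_le (As (j * t)) (Bs (j * t))
      have := (h1 (j * t)).2.2.2
      omega
    have hedge : t * (Bs ((j + 1) * t)).card ≤ eIn G0 (As (j * t) ∪ Bs (j * t)) := by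
      have hsum : t * (Bs ((j + 1) * t)).card ≤ (S.sigma Bs).card := by
        rw [Finset.card_sigma, ← hScard, ← smul_eq_mul, hScard]
        rw [← hScard]
        conv_lhs => rw [hScard]
        have : S.card • (Bs ((j + 1) * t)).card ≤ ∑ i ∈ S, (Bs i).card := by
          apply Finset.card_nsmul_le_sum
          intro i hi
          rw [hS, Finset.mem_Ico] at hi
          exact Finset.card_le_card (hBm hi.2.le)
        rwa [hScard] at this
      refine hsum.trans ?_
      let φ : (Σ _ : ℕ, V) → Sym2 V := fun x => s(x.2, f x.1 x.2)
      have hinj : Set.InjOn φ ((S.sigma Bs : Finset (Σ _ : ℕ, V)) : Set (Σ _ : ℕ, V)) := by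
        rintro ⟨i, b⟩ hx ⟨i', b'⟩ hy hxy
        rw [Finset.mem_coe, Finset.mem_sigma] at hx hy
        obtain ⟨hi, hb⟩ := hx
        obtain ⟨hi', hb'⟩ := hy
        simp only at hi hb hi' hb'
        simp only [φ, Sym2.eq_iff] at hxy
        rcases hxy with ⟨e1, e2⟩ | ⟨e1, e2⟩
        · subst e1
          have := h5 i (hSk i hi) i' (hSk i' hi') b hb hb' e2
          subst this; rfl
        · exact absurd (cB i b hb) (e1 ▸ cA i' _ ((h4 i' (hSk i' hi')).2 b' hb').1)
      rw [← Set.ncard_coe_finset, ← Set.InjOn.ncard_image hinj]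
      apply Set.ncard_le_ncard _ (Set.toFinite _)
      rintro _ ⟨⟨i, b⟩, hx, rfl⟩
      rw [Finset.mem_coe, Finset.mem_sigma] at hx
      obtain ⟨hi, hb⟩ := hx
      simp only at hi hb
      have hji : j * t ≤ i := (Finset.mem_Ico.1 hi).1
      refine ⟨⟨i, hi, Or.inl ⟨hb, rfl⟩⟩, ?_⟩
      simp only [φ, Sym2.mem_iff, forall_eq_or_imp, forall_eq, Finset.mem_union]
      exact ⟨Or.inr (hBm hji hb), Or.inl (hAm hji ((h4 i (hSk i hi)).2 b hb).1)⟩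
    calc t * (As (j * t) ∪ Bs (j * t)).card ≤ t * (2 * (2 * (Bs ((j + 1) * t)).card)) :=
          Nat.mul_le_mul_left _ (hW0.trans (Nat.mul_le_mul_left _ hj))
      _ = 4 * (t * (Bs ((j + 1) * t)).card) := by ring
      _ ≤ _ := Nat.mul_le_mul_left _ hedge

lemma numeric_t (ℓ d : ℝ) (k J t : ℕ) (hℓ : (2:ℝ) ^ 100 ≤ ℓ) (hd : ℓ ^ 4 ≤ d) (hk : d / 4 ≤ k)
    (hJ : (J : ℝ) ≤ ℓ + 1) (hJ0 : 0 < J) (ht : t = k / J) :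
    d / (5 * ℓ) ≤ t ∧ (8:ℝ) * 2 ^ 100 ≤ t := by
  have hX : (1000 : ℝ) ≤ ℓ := le_trans (by norm_num) hℓ
  have h1 : k < (t + 1) * J := by
    rw [ht, mul_comm]; exact Nat.lt_mul_div_succ k hJ0
  have h2 : (k : ℝ) < (t + 1) * J := by exact_mod_cast h1
  have ht0 : (0:ℝ) ≤ t := Nat.cast_nonneg _
  have h3 : d / 4 < (t + 1) * (ℓ + 1) := by nlinarith
  have hl3 : 1000 ^ 3 ≤ ℓ ^ 3 := by gcongr
  have hd2 : ℓ * 1000 ^ 3 ≤ d := by nlinarith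
  have h4 : d / (5 * ℓ) ≤ t := by
    rw [div_le_iff₀ (by positivity)]
    nlinarith
  refine ⟨h4, le_trans ?_ h4⟩
  rw [le_div_iff₀ (by positivity)]
  have : ℓ ^ 4 = ℓ * ℓ * ℓ * ℓ := by ring
  have h5 : 40 * ℓ ≤ ℓ * ℓ := by nlinarith
  have h6 : 1 * (ℓ * ℓ) ≤ (ℓ * ℓ) * ℓ := by nlinarith [mul_self_nonneg ℓ]
  have h7 : ℓ * (40 * ℓ) ≤ ℓ * (ℓ * ℓ * ℓ) := by
    gcongr; linarith
  calc (8:ℝ) * 2 ^ 100 * (5 * ℓ) = 2 ^ 100 * (40 * ℓ) := by ring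
    _ ≤ ℓ * (40 * ℓ) := by gcongr
    _ ≤ d := by linarith

lemma exists_logb_large (X : ℝ) : ∃ N : ℕ, ∀ n : ℕ, N ≤ n → X ≤ Real.logb 2 n := by
  have h := (Real.tendsto_logb_atTop (b := 2) (by norm_num)).comp (tendsto_natCast_atTop_atTop (R := ℝ))
  exact Filter.eventually_atTop.1 (h.eventually_ge_atTop X)

/-- For sufficiently large `n` and `0 < ε < 2⁻³`: every `n`-vertex graph `G` with
`d(G) ≥ (log n)^4` contains an `18`-almost-regular bipartite subgraph `G'` with
`d(G') ≥ d(G)/(400 log n)` which is an `(ε,s)`-expander for some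
`s ≥ d(G')/(log |V(G')|)^2`. -/
theorem statement2 :
    ∃ N : ℕ, ∀ n : ℕ, N ≤ n → ∀ ε : ℝ, 0 < ε → ε < (2 : ℝ) ^ (-(3 : ℤ)) →
      ∀ G : SimpleGraph (Fin n),
        Real.logb 2 n ^ 4 ≤ 2 * (G.edgeSet.ncard : ℝ) / n →
        ∃ (H : G.Subgraph) (s : ℝ),
          H.coe.Colorable 2 ∧
          (∀ v ∈ H.verts, ∀ w ∈ H.verts,
            ((H.neighborSet v).ncard : ℝ) ≤ 18 * ((H.neighborSet w).ncard : ℝ)) ∧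
          (2 * (G.edgeSet.ncard : ℝ) / n) / (400 * Real.logb 2 n) ≤
            2 * (H.edgeSet.ncard : ℝ) / (H.verts.ncard : ℝ) ∧
          (2 * (H.edgeSet.ncard : ℝ) / (H.verts.ncard : ℝ)) /
              Real.logb 2 (H.verts.ncard) ^ 2 ≤ s ∧
          IsExpander H.verts.ncard H.coe ε s := by
  
  classical
  obtain ⟨N, hN⟩ := exists_logb_large (2 ^ 100)
  refine ⟨N, fun n hn ε he0 he G hd => ?_⟩
  have he' : ε < 1 / 8 := lt_of_lt_of_eq he (by norm_num)
  have hℓ := hN n hn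
  set ℓ := Real.logb 2 n with hℓd
  have hℓpos : 0 < ℓ := lt_of_lt_of_le (by positivity) hℓ
  have hnpos : 0 < n := by
    rcases Nat.eq_zero_or_pos n with rfl | h
    · simp [hℓd] at hℓpos
    · exact h
  have hnR : (0 : ℝ) < n := by exact_mod_cast hnpos
  have : Nonempty (Fin n) := ⟨⟨0, hnpos⟩⟩
  set d : ℝ := 2 * (G.edgeSet.ncard : ℝ) / n with hdd
  obtain ⟨c, G1, hG1, hc, hcut⟩ := exists_cut G
  obtain ⟨W, l1, hW, hl1, hWe, hWmax⟩ := exists_opt G1 (fun _ => 1) (fun _ => one_pos)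
  have hmin := opt_min_deg G1 (fun _ => 1) monotone_const W l1 hl1 hWe hWmax
  have hl1d : d / 4 ≤ l1 := by
    have h := hWmax Finset.univ
    have h' : eIn G1 Finset.univ = G1.edgeSet.ncard := by simp [eIn]
    rw [h'] at h
    simp only [Finset.card_univ, Fintype.card_fin, mul_one] at h
    have hcutR : (G.edgeSet.ncard : ℝ) ≤ 2 * G1.edgeSet.ncard := by exact_mod_cast hcut
    rw [hdd, div_div, div_le_iff₀ (by positivity)]
    linarith
  set k := ⌈l1⌉₊ with hk
  set J := ⌊ℓ⌋₊ + 1 with hJ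
  obtain ⟨ht1, ht2⟩ := numeric_t ℓ d k J (k / J) hℓ hd (hl1d.trans (Nat.le_ceil _))
    (by rw [hJ]; push_cast; linarith [Nat.floor_le hℓpos.le]) (Nat.succ_pos _) rfl
  set t := k / J with ht
  have h2J : Nat.card (Fin n) < 2 ^ J := by
    rw [Nat.card_eq_fintype_card, Fintype.card_fin]
    have h1 : ℓ < (J : ℝ) := by rw [hJ]; push_cast; exact Nat.lt_floor_add_one ℓ
    rw [hℓd, Real.logb_lt_iff_lt_rpow (by norm_num) hnR, Real.rpow_natCast] at h1
    exact_mod_cast h1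
  obtain ⟨G0, W0, hG01, hW0, hdeg, hW0e⟩ := exists_almost_reg G1 c hc W hW k t J (by
    intro v hv
    have := hmin v hv
    rw [mul_one] at this
    exact Nat.ceil_le.2 this) h2J (Nat.mul_div_le k J)
  have hG0 : G0 ≤ G := hG01.trans hG1
  have hfpos : ∀ m, 0 < fex m := fun m => by linarith [fex_half m]
  obtain ⟨W2, l, hW2, hl0, hW2e, hW2max⟩ := exists_opt G0 fex hfpos
  have hmin2 := opt_min_deg G0 fex fex_mono W2 l hl0 hW2e hW2max
  have htl : (t : ℝ) ≤ 4 * l := by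
    have h1 := hW2max W0
    have h2 : (t : ℝ) * W0.card ≤ 4 * eIn G0 W0 := by exact_mod_cast hW0e
    have h3 : (0 : ℝ) < W0.card := by exact_mod_cast hW0.card_pos
    have h4 : l * (W0.card * fex W0.card) ≤ l * (W0.card * 1) := by
      gcongr; exact fex_le _
    have h5 : (t : ℝ) * W0.card ≤ (4 * l) * W0.card := by linarith
    exact le_of_mul_le_mul_right h5 h3
  have htpos : (0 : ℝ) < t := lt_of_lt_of_le (by positivity) ht2
  have hlpos : 0 < l := by linarith
  have hm : (0 : ℝ) < W2.card := by exact_mod_cast hW2.card_pos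
  have hlf : (t : ℝ) / 8 ≤ l * fex W2.card := by
    have := fex_half W2.card
    nlinarith
  have hL : 100 ≤ Real.logb 2 W2.card := by
    obtain ⟨v, hv⟩ := hW2
    have h1 := hmin2 v hv
    have h2 : {w | w ∈ W2 ∧ G0.Adj v w}.ncard ≤ W2.card := by
      rw [← Set.ncard_coe_finset]
      exact Set.ncard_le_ncard (fun w hw => hw.1) (Set.toFinite _)
    have h3 : ({w | w ∈ W2 ∧ G0.Adj v w}.ncard : ℝ) ≤ W2.card := by exact_mod_cast h2
    rw [Real.le_logb_iff_rpow_le (by norm_num) hm]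
    have h4 : (2 : ℝ) ^ (100 : ℝ) = 2 ^ 100 := by
      rw [← Real.rpow_natCast]; norm_num
    rw [h4]
    linarith
  have hHe : (indSub G G0 hG0 W2).edgeSet.ncard = eIn G0 W2 := by
    unfold eIn
    congr 1
    ext e
    induction e with | _ a b =>
    simp [indSub]
    tauto
  have hHv : (indSub G G0 hG0 W2).verts.ncard = W2.card := Set.ncard_coe_finset _
  have hHd : 2 * ((indSub G G0 hG0 W2).edgeSet.ncard : ℝ) / (W2.card : ℝ) = 2 * l * fex W2.card := by
    rw [hHe, hW2e]; field_simp
  refine ⟨indSub G G0 hG0 W2, 2 * l * fex W2.card / Real.logb 2 W2.card ^ 2, ?_, ?_, ?_, ?_, ?_⟩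
  · have C : (indSub G G0 hG0 W2).coe.Coloring Bool :=
      SimpleGraph.Coloring.mk (fun v => c v.1) (by
        intro v w h
        exact hc _ _ (hG01 h.2.2))
    simpa using C.colorable
  · intro v hv w hw
    have h1 : ((indSub G G0 hG0 W2).neighborSet v).ncard ≤ t :=
      (Set.ncard_le_ncard (fun x hx => hx.2.2) (Set.toFinite _)).trans (hdeg v)
    have h1R : (((indSub G G0 hG0 W2).neighborSet v).ncard : ℝ) ≤ t := by exact_mod_cast h1
    have h2 := hmin2 w hw
    have h3 : {x | x ∈ W2 ∧ G0.Adj w x}.ncard ≤ ((indSub G G0 hG0 W2).neighborSet w).ncard :=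
      Set.ncard_le_ncard (fun x hx => ⟨hw, hx.1, hx.2⟩) (Set.toFinite _)
    have h3R : ({x | x ∈ W2 ∧ G0.Adj w x}.ncard : ℝ) ≤ ((indSub G G0 hG0 W2).neighborSet w).ncard := by
      exact_mod_cast h3
    linarith
  · rw [hHv, hHd]
    have h1 : d / (400 * ℓ) = d / (5 * ℓ) / 80 := by
      field_simp; ring
    rw [h1]
    linarith
  · rw [hHv, hHd]
  · rw [hHv]
    exact expander_of_opt G G0 hG0 W2 l hlpos ε he0 he' hL hW2e hW2max
end

section
/- For every sufficiently large m, there exists a bipartite graph H with an odd number of edges, with maximum degree at most 102, and with vertex classes A_1 ∪ A_2 and B_1 ∪ B_2, where |A_1| = |B_1| = 2m and |A_2| = |B_2| = 5m, such that the following holds: for every A'_1 ⊆ A_1 and B'_1 ⊆ B_1 with |A'_1| = |B'_1| ≥ m, there is a perfect matching in H between A'_1 ∪ A_2 and B'_1 ∪ B_2. -/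
open Finset

lemma aux_desc (t n k : ℕ) (h : t ≤ n) :
    t.descFactorial k * n ^ k ≤ n.descFactorial k * t ^ k := by
  induction k with
  | zero => simp
  | succ k ih =>
    rw [Nat.descFactorial_succ, Nat.descFactorial_succ, pow_succ, pow_succ]
    have h1 : (t - k) * n ≤ (n - k) * t := by
      rw [Nat.sub_mul, Nat.sub_mul, Nat.mul_comm n t]
      have := Nat.mul_le_mul_left k h
      omega
    calc (t - k) * t.descFactorial k * (n ^ k * n)
        = ((t - k) * n) * (t.descFactorial k * n ^ k) := by ring
      _ ≤ ((n - k) * t) * (n.descFactorial k * t ^ k) := Nat.mul_le_mul h1 ih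
      _ = _ := by ring

lemma aux_choose (t n k : ℕ) (h : t ≤ n) :
    t.choose k * n ^ k ≤ n.choose k * t ^ k := by
  have := aux_desc t n k h
  rw [Nat.descFactorial_eq_factorial_mul_choose, Nat.descFactorial_eq_factorial_mul_choose,
    mul_assoc, mul_assoc] at this
  exact Nat.le_of_mul_le_mul_left this (Nat.factorial_pos k)

lemma aux_perm {α : Type*} [Fintype α] [DecidableEq α] (S T : Finset α) :
    #{π : Equiv.Perm α | ∀ x ∈ S, π x ∈ T} * (Fintype.card α).choose #S
      = (Fintype.card α).factorial * (#T).choose #S := by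
  classical
  have key : ∀ S' ∈ powersetCard #S (univ : Finset α),
      #{π : Equiv.Perm α | ∀ x ∈ S', π x ∈ T} = #{π : Equiv.Perm α | ∀ x ∈ S, π x ∈ T} := by
    intro S' hS'
    rw [mem_powersetCard] at hS'
    have e : {x // x ∈ S} ≃ {x // x ∈ S'} := Fintype.equivOfCardEq (by simp [hS'.2])
    let σ : Equiv.Perm α := Equiv.extendSubtype e
    have hσ : ∀ x, x ∈ S' ↔ ∃ y ∈ S, σ y = x := by
      intro x
      constructor
      · intro hx
        refine ⟨e.symm ⟨x, hx⟩, (e.symm ⟨x, hx⟩).2, ?_⟩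
        rw [Equiv.extendSubtype_apply_of_mem e _ (e.symm ⟨x, hx⟩).2]
        simp
      · rintro ⟨y, hy, rfl⟩
        exact Equiv.extendSubtype_mem e y hy
    refine Finset.card_bij' (fun π _ => σ.trans π) (fun π _ => σ.symm.trans π) ?_ ?_ ?_ ?_
    · intro π hπ
      simp only [mem_filter, mem_univ, true_and, Equiv.trans_apply] at hπ ⊢
      intro x hx
      exact hπ _ ((hσ _).2 ⟨x, hx, rfl⟩)
    · intro π hπ
      simp only [mem_filter, mem_univ, true_and, Equiv.trans_apply] at hπ ⊢
      intro x hx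
      obtain ⟨y, hy, rfl⟩ := (hσ x).1 hx
      simpa using hπ y hy
    · intro π _; ext x; simp
    · intro π _; ext x; simp
  have h1 : ∑ S' ∈ powersetCard #S (univ : Finset α), #{π : Equiv.Perm α | ∀ x ∈ S', π x ∈ T}
      = #{π : Equiv.Perm α | ∀ x ∈ S, π x ∈ T} * (Fintype.card α).choose #S := by
    rw [sum_congr rfl key, sum_const, card_powersetCard, smul_eq_mul, mul_comm, card_univ]
  rw [← h1]
  have h2 := Finset.sum_card_bipartiteAbove_eq_sum_card_bipartiteBelow
    (s := powersetCard #S (univ : Finset α)) (t := (univ : Finset (Equiv.Perm α)))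
    (fun S' π => ∀ x ∈ S', π x ∈ T)
  unfold bipartiteAbove bipartiteBelow at h2
  rw [h2]
  have h3 : ∀ π ∈ (univ : Finset (Equiv.Perm α)),
      #{S' ∈ powersetCard #S (univ : Finset α) | ∀ x ∈ S', π x ∈ T} = (#T).choose #S := by
    intro π _
    have : {S' ∈ powersetCard #S (univ : Finset α) | ∀ x ∈ S', π x ∈ T}
      = powersetCard #S (T.map π.symm.toEmbedding) := by
      ext S'
      simp only [mem_filter, mem_powersetCard, subset_univ, true_and]
      rw [and_comm]
      refine and_congr_left fun _ => ?_
      simp [subset_iff]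
    rw [this, card_powersetCard, card_map]
  rw [sum_congr rfl h3, sum_const, card_univ, Fintype.card_perm, smul_eq_mul]

lemma aux_pow (s : ℕ) : (s : ℝ) ^ s ≤ 3 ^ s * s.factorial := by
  have h := Real.pow_div_factorial_le_exp (s : ℝ) (by positivity) s
  have h2 : Real.exp s ≤ 3 ^ s := by
    have : Real.exp s = Real.exp 1 ^ s := by rw [← Real.exp_nat_mul]; simp
    rw [this]
    exact pow_le_pow_left₀ (by positivity) (by linarith [Real.exp_one_lt_d9]) _
  have := h.trans h2
  rwa [div_le_iff₀ (by positivity)] at this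

lemma aux_chs (N s : ℕ) (hN : 0 < N) : ((N.choose s : ℕ) : ℝ) * ((s : ℝ) / N) ^ s ≤ 3 ^ s := by
  have h1 : ((N.choose s : ℕ) : ℝ) ≤ (N : ℝ) ^ s / s.factorial := Nat.choose_le_pow_div s N
  have h2 := aux_pow s
  have hN' : (0 : ℝ) < N := by exact_mod_cast hN
  calc ((N.choose s : ℕ) : ℝ) * ((s : ℝ) / N) ^ s ≤ (N : ℝ) ^ s / s.factorial * ((s : ℝ) / N) ^ s := by gcongr
    _ = (s : ℝ) ^ s / s.factorial := by rw [div_pow]; field_simp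
    _ ≤ 3 ^ s := by rwa [div_le_iff₀ (by positivity)]

/-- the single term of the union bound -/
lemma aux_term (m s : ℕ) (hm : 0 < m) (hs : s ≤ 4 * m) :
    (((10 * m).choose s : ℕ) : ℝ) * ((5 * m).choose s : ℕ) * ((s : ℝ) / (5 * m : ℕ)) ^ (s * 33)
      ≤ (1 / 4) ^ s := by
  have a := aux_chs (5 * m) s (by omega)
  have b := aux_chs (10 * m) s (by omega)
  set x : ℝ := (s : ℝ) / (5 * m : ℕ) with hx
  have hm' : (0 : ℝ) < m := by exact_mod_cast hm
  have hx0 : 0 ≤ x := by positivity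
  have hx1 : x ≤ 4 / 5 := by
    rw [hx, div_le_iff₀ (by positivity)]
    have : (s : ℝ) ≤ 4 * m := by exact_mod_cast hs
    push_cast; linarith
  have hxx : (s : ℝ) / (10 * m : ℕ) = x / 2 := by rw [hx]; push_cast; field_simp; ring
  rw [hxx] at b
  have b' : (((10 * m).choose s : ℕ) : ℝ) * x ^ s ≤ 6 ^ s := by
    have : x ^ s = 2 ^ s * (x / 2) ^ s := by rw [← mul_pow]; congr 1; ring
    rw [this]
    calc _ = 2 ^ s * ((((10 * m).choose s : ℕ) : ℝ) * (x / 2) ^ s) := by ring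
      _ ≤ 2 ^ s * 3 ^ s := by gcongr
      _ = 6 ^ s := by rw [← mul_pow]; norm_num
  calc _ = ((((10 * m).choose s : ℕ) : ℝ) * x ^ s) * (((5 * m).choose s : ℕ) * x ^ s) * (x ^ 31) ^ s := by
        rw [← pow_mul]; ring
    _ ≤ 6 ^ s * 3 ^ s * ((4 / 5) ^ 31) ^ s := by gcongr
    _ = (6 * 3 * (4 / 5) ^ 31) ^ s := by rw [mul_pow, mul_pow]
    _ ≤ _ := by gcongr; norm_num

lemma aux_core (m : ℕ) (hm : 0 < m) :
    ∃ ω : Fin 33 → Equiv.Perm (Fin (5 * m) × Fin 2),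
      ∀ S : Finset (Fin (5 * m) × Fin 2), #S ≤ 4 * m →
        #S ≤ #{y | ∃ i, ∃ x ∈ S, (ω i x).1 = y} := by
  classical
  by_contra! hcon
  have hα : Fintype.card (Fin (5 * m) × Fin 2) = 10 * m := by simp; ring
  let F := (10 * m).factorial
  let pr : Finset (Fin (5 * m)) → Finset (Fin (5 * m) × Fin 2) := fun T => T ×ˢ univ
  let P : Finset (Fin (5 * m) × Fin 2) → Finset (Fin (5 * m)) → Finset (Equiv.Perm (Fin (5 * m) × Fin 2)) :=
    fun S T => {π | ∀ x ∈ S, π x ∈ pr T}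
  let bad : Finset (Fin (5 * m) × Fin 2) → Finset (Fin (5 * m)) → Finset (Fin 33 → Equiv.Perm (Fin (5 * m) × Fin 2)) :=
    fun S T => Fintype.piFinset fun _ => P S T
  have hcov : (univ : Finset (Fin 33 → Equiv.Perm (Fin (5 * m) × Fin 2))) ⊆
      (Icc 1 (4 * m)).biUnion fun s => (powersetCard s (univ : Finset (Fin (5 * m) × Fin 2))).biUnion fun S =>
        (powersetCard s (univ : Finset (Fin (5 * m)))).biUnion fun T => bad S T := by
    intro ω _
    obtain ⟨S, hS, hlt⟩ := hcon ω
    obtain ⟨T, hT1, hT2⟩ := Finset.exists_superset_card_eq hlt.le (by simp; omega)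
    simp only [mem_biUnion, mem_Icc, mem_powersetCard, subset_univ, true_and]
    refine ⟨#S, ⟨by omega, hS⟩, S, rfl, T, hT2, ?_⟩
    simp only [bad, P, pr, Fintype.mem_piFinset, mem_filter, mem_univ, true_and, mem_product, and_true]
    intro i x hx
    exact hT1 (by simp only [mem_filter, mem_univ, true_and]; exact ⟨i, x, hx, rfl⟩)
  have hP : ∀ s S T, #S = s → #T = s → s ≤ 4 * m →
      (#(P S T) : ℝ) ≤ F * ((s : ℝ) / (5 * m : ℕ)) ^ s := by
    intro s S T hS hT hs
    have h := aux_perm S (pr T)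
    have hc : #(pr T) = 2 * s := by simp [pr, hT]; ring
    rw [hα, hc, hS] at h
    have h2 := aux_choose (2 * s) (10 * m) s (by omega)
    have hpos : 0 < (10 * m).choose s := Nat.choose_pos (by omega)
    have h3 : #(P S T) * (10 * m) ^ s ≤ F * (2 * s) ^ s := by
      refine le_of_mul_le_mul_left ?_ hpos
      calc (10 * m).choose s * (#(P S T) * (10 * m) ^ s)
          = (#(P S T) * (10 * m).choose s) * (10 * m) ^ s := by ring
        _ = F * (((2 * s).choose s) * (10 * m) ^ s) := by
            rw [show #(P S T) * (10 * m).choose s = F * (2 * s).choose s from h]; ring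
        _ ≤ F * ((10 * m).choose s * (2 * s) ^ s) := by gcongr
        _ = _ := by ring
    have h4 : (#(P S T) : ℝ) * (10 * m) ^ s ≤ F * (2 * s) ^ s := by exact_mod_cast h3
    have hm' : (0 : ℝ) < m := by exact_mod_cast hm
    have h5 : ((s : ℝ) / (5 * m : ℕ)) ^ s = (2 * s) ^ s / (10 * m) ^ s := by
      rw [← div_pow]; congr 1; push_cast; field_simp; ring
    rw [h5, ← mul_div_assoc, le_div_iff₀ (by positivity)]
    exact h4
  have hcard := card_le_card hcov
  have hF : (0 : ℝ) < F := by exact_mod_cast Nat.factorial_pos _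
  have htot : ((#(univ : Finset (Fin 33 → Equiv.Perm (Fin (5 * m) × Fin 2))) : ℕ) : ℝ) = (F : ℝ) ^ 33 := by
    rw [card_univ, Fintype.card_fun, Fintype.card_perm, hα]; simp [F]
  have hub : (#((Icc 1 (4 * m)).biUnion fun s => (powersetCard s (univ : Finset (Fin (5 * m) × Fin 2))).biUnion fun S =>
        (powersetCard s (univ : Finset (Fin (5 * m)))).biUnion fun T => bad S T) : ℝ)
      ≤ ∑ s ∈ Icc 1 (4 * m), (F : ℝ) ^ 33 * (1 / 4) ^ s := by
    refine le_trans (Nat.cast_le.2 card_biUnion_le) ?_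
    push_cast
    refine sum_le_sum fun s hs => ?_
    rw [mem_Icc] at hs
    have hb : #((powersetCard s (univ : Finset (Fin (5 * m) × Fin 2))).biUnion fun S =>
        (powersetCard s (univ : Finset (Fin (5 * m)))).biUnion fun T => bad S T)
        ≤ ∑ S ∈ powersetCard s (univ : Finset (Fin (5 * m) × Fin 2)), ∑ T ∈ powersetCard s (univ : Finset (Fin (5 * m))),
          #(bad S T) :=
      card_biUnion_le.trans (sum_le_sum fun S _ => card_biUnion_le)
    refine le_trans (Nat.cast_le.2 hb) ?_
    push_cast
    calc _ ≤ ∑ S ∈ powersetCard s (univ : Finset (Fin (5 * m) × Fin 2)), ∑ T ∈ powersetCard s (univ : Finset (Fin (5 * m))),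
          (F * ((s : ℝ) / (5 * m : ℕ)) ^ s) ^ 33 := by
            refine sum_le_sum fun S hS => sum_le_sum fun T hT => ?_
            rw [mem_powersetCard] at hS hT
            have := hP s S T hS.2 hT.2 hs.2
            simp only [bad, Fintype.card_piFinset, prod_const, card_univ, Fintype.card_fin]
            rw [Nat.cast_pow]
            gcongr
      _ = F ^ 33 * ((((10 * m).choose s : ℕ) : ℝ) * ((5 * m).choose s : ℕ) *
            ((s : ℝ) / (5 * m : ℕ)) ^ (s * 33)) := by
          rw [sum_const, sum_const, card_powersetCard, card_powersetCard, card_univ, card_univ, hα,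
            Fintype.card_fin, nsmul_eq_mul, nsmul_eq_mul, pow_mul, mul_pow]
          ring
      _ ≤ _ := by
          have := aux_term m s hm hs.2
          gcongr
  have hgeo : ∑ s ∈ Icc 1 (4 * m), ((1 : ℝ) / 4) ^ s < 1 := by
    have h1 : ∑ s ∈ Icc 1 (4 * m), ((1 : ℝ) / 4) ^ s
      = ∑ i ∈ range (4 * m), (1 / 4) * ((1 : ℝ) / 4) ^ i := by
      rw [Finset.range_eq_Ico, ← Finset.Ico_add_one_right_eq_Icc, Finset.sum_Ico_eq_sum_range]
      simp [pow_add]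
    rw [h1, ← mul_sum, geom_sum_eq (by norm_num)]
    have : (0 : ℝ) < (1 / 4) ^ (4 * m) := by positivity
    have h2 : (1 : ℝ) / 4 * (((1 / 4) ^ (4 * m) - 1) / (1 / 4 - 1))
        = (1 - (1 / 4) ^ (4 * m)) / 3 := by ring
    rw [h2]
    linarith
  rw [← mul_sum] at hub
  have hcard' : ((#(univ : Finset (Fin 33 → Equiv.Perm (Fin (5 * m) × Fin 2))) : ℕ) : ℝ) ≤ _ := Nat.cast_le.2 hcard
  rw [htot] at hcard'
  have := hcard'.trans hub
  have hF33 : (0 : ℝ) < (F : ℝ) ^ 33 := by positivity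
  nlinarith

lemma aux_rel {V : Type*} [Fintype V] [DecidableEq V] (m : ℕ) (hm : 0 < m) (L R : Finset V)
    (hL : #L = 7 * m) (hR : #R = 5 * m) :
    ∃ r : V → V → Prop, (∀ x y, r x y → x ∈ L ∧ y ∈ R) ∧
      (∀ x, {y | r x y}.ncard ≤ 33) ∧ (∀ y, {x | r x y}.ncard ≤ 66) ∧
      ∀ S ⊆ L, #S ≤ 4 * m → #S ≤ {y | ∃ x ∈ S, r x y}.ncard := by
  classical
  obtain ⟨ω, hω⟩ := aux_core m hm
  have e : Fin (5 * m) ≃ {y // y ∈ R} := Fintype.equivOfCardEq (by simp [hR])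
  obtain ⟨g⟩ : Nonempty ({x // x ∈ L} ↪ Fin (5 * m) × Fin 2) :=
    Function.Embedding.nonempty_of_card_le (by simp [hL]; omega)
  refine ⟨fun x y => ∃ hx : x ∈ L, ∃ i, (e (ω i (g ⟨x, hx⟩)).1 : V) = y, ?_, ?_, ?_, ?_⟩
  · rintro x y ⟨hx, i, rfl⟩
    exact ⟨hx, (e _).2⟩
  · intro x
    by_cases hx : x ∈ L
    · have : {y | ∃ hx : x ∈ L, ∃ i, (e (ω i (g ⟨x, hx⟩)).1 : V) = y} =
          Set.range (fun i => (e (ω i (g ⟨x, hx⟩)).1 : V)) := by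
        ext y; simp [hx]
      rw [this, ← Set.image_univ]
      refine (Set.ncard_image_le Set.finite_univ).trans ?_
      simp
    · simp [hx]
  · intro y
    have hsub : {x | ∃ hx : x ∈ L, ∃ i, (e (ω i (g ⟨x, hx⟩)).1 : V) = y} ⊆
        {x | ∃ hx : x ∈ L, ∃ p : Fin 33 × Fin 2, ∃ hy : y ∈ R,
          g ⟨x, hx⟩ = (ω p.1).symm (e.symm ⟨y, hy⟩, p.2)} := by
      rintro x ⟨hx, i, rfl⟩
      exact ⟨hx, (i, (ω i (g ⟨x, hx⟩)).2), (e _).2, by simp⟩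
    refine (Set.ncard_le_ncard hsub).trans ?_
    by_cases hy : y ∈ R
    · choose! p hp using fun (x : V) (hx : x ∈ {x | ∃ hx : x ∈ L, ∃ p : Fin 33 × Fin 2, ∃ hy : y ∈ R,
          g ⟨x, hx⟩ = (ω p.1).symm (e.symm ⟨y, hy⟩, p.2)}) => hx.2
      have := Set.ncard_le_ncard_of_injOn (t := (Set.univ : Set (Fin 33 × Fin 2))) p
        (fun _ _ => Set.mem_univ _) (s := {x | ∃ hx : x ∈ L, ∃ p : Fin 33 × Fin 2, ∃ hy : y ∈ R,
          g ⟨x, hx⟩ = (ω p.1).symm (e.symm ⟨y, hy⟩, p.2)}) (by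
          intro a ha b hb hab
          obtain ⟨_, h1⟩ := hp a ha
          obtain ⟨_, h2⟩ := hp b hb
          rw [hab, ← h2] at h1
          simpa using g.injective h1) Set.finite_univ
      simpa [Set.ncard_univ] using this
    · simp [hy]
  · intro S hS hc
    let S' : Finset (Fin (5 * m) × Fin 2) := S.attach.map
      ⟨fun x => g ⟨x.1, hS x.2⟩, fun a b h => by
        have h' := g.injective h
        rw [Subtype.mk.injEq] at h'
        exact Subtype.ext h'⟩
    have hS' : #S' = #S := by simp [S']
    have h := hω S' (by omega)
    rw [hS'] at h
    refine h.trans ?_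
    rw [← Set.ncard_coe_finset]
    refine Set.ncard_le_ncard_of_injOn (fun y => (e y : V)) ?_ ?_
    · intro y hy
      simp only [coe_filter, mem_univ, true_and, Set.mem_ofPred_eq] at hy
      obtain ⟨i, x, hx, rfl⟩ := hy
      simp only [S', mem_map, mem_attach, true_and, Function.Embedding.coeFn_mk] at hx
      obtain ⟨a, rfl⟩ := hx
      exact ⟨a.1, a.2, hS a.2, i, rfl⟩
    · intro a _ b _ hab
      simpa [Subtype.ext_iff] using hab

lemma aux_hall {V : Type*} [Fintype V] [DecidableEq V] (H : SimpleGraph V) (m : ℕ)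
    (A B : Finset V) (hdis : Disjoint A B) (hAB : #A = #B) (hA : #A ≤ 7 * m)
    (h1 : ∀ S ⊆ A, #S ≤ 4 * m → #S ≤ {y | y ∈ B ∧ ∃ x ∈ S, H.Adj x y}.ncard)
    (h2 : ∀ T ⊆ B, #T ≤ 4 * m → #T ≤ {x | x ∈ A ∧ ∃ y ∈ T, H.Adj y x}.ncard) :
    ∃ M' : H.Subgraph, M'.IsMatching ∧ M'.verts = (A : Set V) ∪ B ∧
      ∀ u v, M'.Adj u v → (u ∈ A ∧ v ∈ B) ∨ (u ∈ B ∧ v ∈ A) := by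
  classical
  let N : Finset V → Finset V := fun S => {y ∈ B | ∃ x ∈ S, H.Adj x y}
  have hN : ∀ S, {y | y ∈ B ∧ ∃ x ∈ S, H.Adj x y}.ncard = #(N S) := by
    intro S; rw [← Set.ncard_coe_finset]; congr 1; ext y; simp [N]
  have hall : ∀ S ⊆ A, #S ≤ #(N S) := by
    intro S hS
    by_cases hc : #S ≤ 4 * m
    · rw [← hN]; exact h1 S hS hc
    · by_contra! hlt
      obtain ⟨S0, hS0, hS0c⟩ := Finset.exists_subset_card_eq (show 4 * m ≤ #S by omega)
      have a1 : 4 * m ≤ #(N S0) := by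
        rw [← hN, ← hS0c]; exact h1 S0 (hS0.trans hS) hS0c.le
      have a2 : #(N S0) ≤ #(N S) := card_le_card (by
        intro y hy
        simp only [N, mem_filter] at hy ⊢
        obtain ⟨hy, x, hx, hxy⟩ := hy
        exact ⟨hy, x, hS0 hx, hxy⟩)
      have a3 : #(B \ N S) = #B - #(N S) := card_sdiff_of_subset (filter_subset _ _)
      have a4 := h2 (B \ N S) sdiff_subset (by omega)
      have a5 : {x | x ∈ A ∧ ∃ y ∈ B \ N S, H.Adj y x} ⊆ ((A \ S : Finset V) : Set V) := by
        rintro x ⟨hx, y, hy, hyx⟩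
        simp only [coe_sdiff, Set.mem_sdiff, mem_coe]
        refine ⟨hx, fun hxS => ?_⟩
        rw [mem_sdiff] at hy
        exact hy.2 (by simp only [N, mem_filter]; exact ⟨hy.1, x, hxS, hyx.symm⟩)
      have a6 := Set.ncard_le_ncard a5
      rw [Set.ncard_coe_finset, card_sdiff_of_subset hS] at a6
      have := card_le_card hS
      have := card_le_card (filter_subset (fun y => ∃ x ∈ S, H.Adj x y) B)
      change #(N S) ≤ _ at this
      omega
  obtain ⟨f, hf, hft⟩ := (Finset.all_card_le_biUnion_card_iff_exists_injective
    (fun a : {x // x ∈ A} => ({y ∈ B | H.Adj a y} : Finset V))).1 (by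
      intro s
      have := hall (s.map (Function.Embedding.subtype _)) (by
        intro x hx; simp at hx; exact hx.1)
      rw [card_map] at this
      refine this.trans (card_le_card ?_)
      intro y hy
      simp only [N, mem_filter, mem_map, Function.Embedding.subtype_apply] at hy
      obtain ⟨hy, x, ⟨a, ha, rfl⟩, hxy⟩ := hy
      simp only [mem_biUnion, mem_filter]
      exact ⟨a, ha, hy, hxy⟩)
  simp only [mem_filter] at hft
  have hsurj : ∀ y ∈ B, ∃ a, f a = y := by
    have : (univ.image f) = B := by
      refine eq_of_subset_of_card_le ?_ ?_
      · intro y hy; simp only [mem_image, mem_univ, true_and] at hy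
        obtain ⟨a, rfl⟩ := hy; exact (hft a).1
      · rw [card_image_of_injective _ hf]; simp [hAB]
    intro y hy
    rw [← this] at hy
    simpa using hy
  have hd : ∀ x, x ∈ A → x ∈ B → False := fun x ha hb => (Finset.disjoint_left.1 hdis) ha hb
  let M : H.Subgraph :=
    { verts := (A : Set V) ∪ B
      Adj := fun u v => (∃ a, a.1 = u ∧ f a = v) ∨ (∃ a, a.1 = v ∧ f a = u)
      adj_sub := by
        rintro u v (⟨a, rfl, rfl⟩ | ⟨a, rfl, rfl⟩)
        · exact (hft a).2
        · exact (hft a).2.symm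
      edge_vert := by
        rintro u v (⟨a, rfl, rfl⟩ | ⟨a, rfl, rfl⟩)
        · exact Or.inl a.2
        · exact Or.inr (hft a).1
      symm := ⟨fun u v h => h.symm⟩ }
  refine ⟨M, ?_, rfl, ?_⟩
  · rintro v (hv | hv)
    · refine ⟨f ⟨v, hv⟩, Or.inl ⟨⟨v, hv⟩, rfl, rfl⟩, ?_⟩
      rintro w (⟨a, rfl, rfl⟩ | ⟨a, rfl, rfl⟩)
      · rfl
      · exact (hd _ hv (hft a).1).elim
    · obtain ⟨a, rfl⟩ := hsurj v hv
      refine ⟨a.1, Or.inr ⟨a, rfl, rfl⟩, ?_⟩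
      rintro w (⟨b, hb, rfl⟩ | ⟨b, rfl, hb⟩)
      · exact (hd _ b.2 (by rw [hb]; exact hv)).elim
      · rw [hf hb]
  · rintro u v (⟨a, rfl, rfl⟩ | ⟨a, rfl, rfl⟩)
    · exact Or.inl ⟨a.2, (hft a).1⟩
    · exact Or.inr ⟨(hft a).1, a.2⟩

/-- adding one edge changes parity -/
lemma aux_parity {V : Type*} [Fintype V] (H : SimpleGraph V) (a b : V) (hab : a ≠ b)
    (h : ¬ H.Adj a b) : ∃ H' : SimpleGraph V, Odd H'.edgeSet.ncard ∧ H ≤ H' ∧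
      ∀ u v, H'.Adj u v → H.Adj u v ∨ (u = a ∧ v = b) ∨ (u = b ∧ v = a) := by
  classical
  by_cases ho : Odd H.edgeSet.ncard
  · exact ⟨H, ho, le_rfl, fun u v h => Or.inl h⟩
  · refine ⟨H ⊔ SimpleGraph.edge a b, ?_, le_sup_left, ?_⟩
    · rw [SimpleGraph.edgeSet_sup, SimpleGraph.edgeSet_edge_of_ne hab, Set.union_singleton,
        Set.ncard_insert_of_notMem (by simpa using h)]
      rw [Nat.not_odd_iff_even] at ho
      exact ho.add_one
    · intro u v huv
      rw [SimpleGraph.sup_adj, SimpleGraph.edge_adj] at huv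
      tauto

theorem statement6 :
    ∃ M : ℕ, ∀ m : ℕ, M ≤ m →
      ∃ (H : SimpleGraph (Fin (14 * m))) (A₁ A₂ B₁ B₂ : Set (Fin (14 * m))),
        Odd H.edgeSet.ncard ∧
        (∀ v, (H.neighborSet v).ncard ≤ 102) ∧
        [A₁, A₂, B₁, B₂].Pairwise Disjoint ∧
        A₁.ncard = 2 * m ∧ B₁.ncard = 2 * m ∧ A₂.ncard = 5 * m ∧ B₂.ncard = 5 * m ∧
        (∀ u v, H.Adj u v →
          (u ∈ A₁ ∪ A₂ ∧ v ∈ B₁ ∪ B₂) ∨ (u ∈ B₁ ∪ B₂ ∧ v ∈ A₁ ∪ A₂)) ∧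
        ∀ A₁' ⊆ A₁, ∀ B₁' ⊆ B₁, A₁'.ncard = B₁'.ncard → m ≤ A₁'.ncard →
          ∃ M' : H.Subgraph, M'.IsMatching ∧
            M'.verts = (A₁' ∪ A₂) ∪ (B₁' ∪ B₂) ∧
            ∀ u v, M'.Adj u v →
              (u ∈ A₁' ∪ A₂ ∧ v ∈ B₁' ∪ B₂) ∨ (u ∈ B₁' ∪ B₂ ∧ v ∈ A₁' ∪ A₂) := by
  classical
  refine ⟨1, fun m hm => ?_⟩
  -- four disjoint finsets
  have hex : ∃ A₁ A₂ B₁ B₂ : Finset (Fin (14 * m)), Disjoint A₁ A₂ ∧ Disjoint A₁ B₁ ∧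
      Disjoint A₁ B₂ ∧ Disjoint A₂ B₁ ∧ Disjoint A₂ B₂ ∧ Disjoint B₁ B₂ ∧
      #A₁ = 2 * m ∧ #A₂ = 5 * m ∧ #B₁ = 2 * m ∧ #B₂ = 5 * m := by
    obtain ⟨A₁, -, h1⟩ := exists_subset_card_eq
      (s := (univ : Finset (Fin (14 * m)))) (n := 2 * m) (by simp; omega)
    have c1 : #A₁ᶜ = 12 * m := by rw [card_compl, h1]; simp; omega
    obtain ⟨A₂, s2, h2⟩ := exists_subset_card_eq (s := A₁ᶜ) (n := 5 * m) (by omega)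
    have c2 : #(A₁ᶜ \ A₂) = 7 * m := by rw [card_sdiff_of_subset s2]; omega
    obtain ⟨B₁, s3, h3⟩ := exists_subset_card_eq (s := A₁ᶜ \ A₂) (n := 2 * m) (by omega)
    have c3 : #((A₁ᶜ \ A₂) \ B₁) = 5 * m := by rw [card_sdiff_of_subset s3]; omega
    refine ⟨A₁, A₂, B₁, (A₁ᶜ \ A₂) \ B₁, ?_, ?_, ?_, ?_, ?_, ?_, h1, h2, h3, c3⟩ <;>
      rw [Finset.disjoint_left] <;> intro x hx hx'
    · have := s2 hx'; simp_all
    · have := s3 hx'; simp_all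
    · simp_all
    · have := s3 hx'; simp_all
    · simp_all
    · simp_all
  obtain ⟨A₁, A₂, B₁, B₂, d12, d13, d14, d23, d24, d34, cA1, cA2, cB1, cB2⟩ := hex
  have cA : #(A₁ ∪ A₂) = 7 * m := by rw [card_union_of_disjoint d12]; omega
  have cB : #(B₁ ∪ B₂) = 7 * m := by rw [card_union_of_disjoint d34]; omega
  have dAB : ∀ x, x ∈ A₁ ∪ A₂ → x ∈ B₁ ∪ B₂ → False := by
    intro x h h'
    rw [Finset.disjoint_left] at d13 d14 d23 d24
    simp only [mem_union] at h h'
    have := @d13 x; have := @d14 x; have := @d23 x; have := @d24 x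
    tauto
  obtain ⟨r, r0, r1, r2, r3⟩ := aux_rel m (by omega) (A₁ ∪ A₂) B₂ cA cB2
  obtain ⟨q, q0, q1, q2, q3⟩ := aux_rel m (by omega) (B₁ ∪ B₂) A₂ cB cA2
  have r0' : ∀ x y, r x y → x ∈ A₁ ∪ A₂ ∧ y ∈ B₁ ∪ B₂ := fun x y h =>
    ⟨(r0 x y h).1, mem_union_right _ (r0 x y h).2⟩
  have q0' : ∀ x y, q x y → x ∈ B₁ ∪ B₂ ∧ y ∈ A₁ ∪ A₂ := fun x y h =>
    ⟨(q0 x y h).1, mem_union_right _ (q0 x y h).2⟩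
  let H0 : SimpleGraph (Fin (14 * m)) :=
    { Adj := fun u v => r u v ∨ r v u ∨ q u v ∨ q v u
      symm := ⟨fun u v h => by tauto⟩
      loopless := ⟨fun u h => by
        rcases h with h | h | h | h
        · exact dAB _ (r0' _ _ h).1 (r0' _ _ h).2
        · exact dAB _ (r0' _ _ h).1 (r0' _ _ h).2
        · exact dAB _ (q0' _ _ h).2 (q0' _ _ h).1
        · exact dAB _ (q0' _ _ h).2 (q0' _ _ h).1⟩ }
  obtain ⟨a, ha⟩ : A₁.Nonempty := card_pos.1 (by omega)
  obtain ⟨b, hb⟩ : B₁.Nonempty := card_pos.1 (by omega)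
  have ha' : a ∈ A₁ ∪ A₂ := mem_union_left _ ha
  have hb' : b ∈ B₁ ∪ B₂ := mem_union_left _ hb
  have hnadj : ¬ H0.Adj a b := by
    rintro (h | h | h | h)
    · exact Finset.disjoint_left.1 d34 hb (r0 _ _ h).2
    · exact dAB _ ha' (r0' _ _ h).2
    · exact dAB _ ha' (q0' _ _ h).1
    · exact Finset.disjoint_left.1 d12 ha (q0 _ _ h).2
  obtain ⟨H, hodd, hle, hH⟩ := aux_parity H0 a b (fun h => dAB a ha' (h ▸ hb')) hnadj
  refine ⟨H, A₁, A₂, B₁, B₂, hodd, ?_, ?_, ?_, ?_, ?_, ?_, ?_, ?_⟩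
  · intro v
    have key : ∀ X Y Z : Set (Fin (14 * m)), X.ncard ≤ 33 → Y.ncard ≤ 66 → Z.ncard ≤ 1 →
        H.neighborSet v ⊆ (X ∪ Y) ∪ Z → (H.neighborSet v).ncard ≤ 102 := by
      intro X Y Z hX hY hZ hs
      have := Set.ncard_le_ncard hs
      have := Set.ncard_union_le (X ∪ Y) Z
      have := Set.ncard_union_le X Y
      omega
    by_cases hv : v ∈ A₁ ∪ A₂
    · refine key {u | r v u} {u | q u v} {b} (r1 v) (q2 v) (by simp) ?_
      intro u hu
      rcases hH v u hu with (h | h | h | h) | ⟨h, h'⟩ | ⟨h, h'⟩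
      · exact Or.inl (Or.inl h)
      · exact (dAB _ hv (r0' _ _ h).2).elim
      · exact (dAB _ hv (q0' _ _ h).1).elim
      · exact Or.inl (Or.inr h)
      · exact Or.inr h'
      · exact (dAB _ hv (h ▸ hb')).elim
    · refine key {u | q v u} {u | r u v} {a} (q1 v) (r2 v) (by simp) ?_
      intro u hu
      rcases hH v u hu with (h | h | h | h) | ⟨h, h'⟩ | ⟨h, h'⟩
      · exact (hv (r0' _ _ h).1).elim
      · exact Or.inl (Or.inr h)
      · exact Or.inl (Or.inl h)
      · exact (hv (q0' _ _ h).2).elim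
      · exact (hv (h ▸ ha')).elim
      · exact Or.inr h'
  · simp [d12, d13, d14, d23, d24, d34]
  · simpa using cA1
  · simpa using cB1
  · simpa using cA2
  · simpa using cB2
  · intro u v huv
    have : (u ∈ A₁ ∪ A₂ ∧ v ∈ B₁ ∪ B₂) ∨ (u ∈ B₁ ∪ B₂ ∧ v ∈ A₁ ∪ A₂) := by
      rcases hH u v huv with (h | h | h | h) | ⟨h, h'⟩ | ⟨h, h'⟩
      · exact Or.inl (r0' _ _ h)
      · exact Or.inr (r0' _ _ h).symm
      · exact Or.inr (q0' _ _ h)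
      · exact Or.inl (q0' _ _ h).symm
      · subst h; subst h'; exact Or.inl ⟨ha', hb'⟩
      · subst h; subst h'; exact Or.inr ⟨hb', ha'⟩
    simpa only [mem_union, Set.mem_union, mem_coe] using this
  · intro A' hA' B' hB' hc hmc
    lift A' to Finset (Fin (14 * m)) using Set.toFinite _
    lift B' to Finset (Fin (14 * m)) using Set.toFinite _
    rw [Set.ncard_coe_finset, Set.ncard_coe_finset] at hc
    rw [coe_subset] at hA' hB'
    have e1 : #(A' ∪ A₂) = #A' + #A₂ := card_union_of_disjoint (disjoint_of_subset_left hA' d12)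
    have e2 : #(B' ∪ B₂) = #B' + #B₂ := card_union_of_disjoint (disjoint_of_subset_left hB' d34)
    have e3 := card_le_card hA'
    have sA : A' ∪ A₂ ⊆ A₁ ∪ A₂ := union_subset_union_left hA'
    have sB : B' ∪ B₂ ⊆ B₁ ∪ B₂ := union_subset_union_left hB'
    obtain ⟨M', hM, hM2, hM3⟩ := aux_hall H m (A' ∪ A₂) (B' ∪ B₂)
      (Finset.disjoint_left.2 fun x hx hx' => dAB x (sA hx) (sB hx')) (by omega) (by omega)
      (by
        intro S hS hSc
        refine (r3 S (hS.trans sA) hSc).trans (Set.ncard_le_ncard ?_)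
        rintro y ⟨x, hx, hxy⟩
        exact ⟨mem_union_right _ (r0 _ _ hxy).2, x, hx, hle (Or.inl hxy)⟩)
      (by
        intro S hS hSc
        refine (q3 S (hS.trans sB) hSc).trans (Set.ncard_le_ncard ?_)
        rintro y ⟨x, hx, hxy⟩
        exact ⟨mem_union_right _ (q0 _ _ hxy).2, x, hx, hle (Or.inr (Or.inr (Or.inl hxy)))⟩)
    refine ⟨M', hM, by rw [hM2]; push_cast; rfl, ?_⟩
    intro u v huv
    have := hM3 u v huv
    simpa only [mem_union, Set.mem_union, mem_coe] using this
end

section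
/- Let G be an n-vertex graph and V' ⊆ V(G). Let d ≥ (log n)^{15}, let 0 ≤ d' ≤ d, let 1 ≤ t ≤ d and s ≥ 0 be integers, and let τ = 1 or τ = t−1. Let V^i_j, for i ∈ [t] and j ∈ [s], be pairwise disjoint subsets of V(G) \ V' each of size at most d^{1/8}, and let V = V' ∪ (⋃_{i∈[t], j∈[s]} V^i_j). For every j ∈ [s], independently, let S_j be a uniformly random subset of [t] of size τ. Let U be a uniformly random subset of V' of size ⌊(τ/t)·|V'|⌋, independent of the S_j. Let Z denote the random set U ∪ (⋃_{j∈[s], i∈S_j} V^i_j). Then: (1) if a vertex v ∈ V(G) satisfies d_G(v,V) ≤ d + d', then d_G(v,Z) ≤ (τ/t)·d + d' + d^{2/3} with probability 1 − n^{−ω(1)} (that is, for every constant K > 0, the failure probability is at most n^{−K} for all sufficiently large n); and (2) if a vertex v ∈ V(G) satisfies d_G(v,V) ≥ d − d', then d_G(v,Z) ≥ (τ/t)·d − d' − d^{2/3} with probability 1 − n^{−ω(1)}. -/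
/-- The sample space for choosing, independently for each `j ∈ [s]`, a uniformly random
subset `S_j ⊆ [t]` of size `τ`, together with a uniformly random subset `U ⊆ V'` of size
`⌊(τ/t)·|V'|⌋` (independent of the `S_j`); the product of uniform distributions is the
uniform distribution on this product space. -/
abbrev Omega9 (n s t τ : ℕ) (V' : Set (Fin n)) : Type :=
  (Fin s → {S : Finset (Fin t) // S.card = τ}) ×
    {U : Finset (Fin n) // (↑U : Set (Fin n)) ⊆ V' ∧
      U.card = ⌊(τ : ℝ) / t * V'.ncard⌋₊}

/-- The random set `Z = U ∪ ⋃_{j ∈ [s], i ∈ S_j} V^i_j` determined by an outcome `ω`. -/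
def Z9 {n s t τ : ℕ} {V' : Set (Fin n)} (Vij : Fin t → Fin s → Set (Fin n))
    (ω : Omega9 n s t τ V') : Set (Fin n) :=
  (↑ω.2.1 : Set (Fin n)) ∪ ⋃ j : Fin s, ⋃ i ∈ (ω.1 j).1, Vij i j


lemma aux_exp_quad {x : ℝ} (hx : |x| ≤ 1) : Real.exp x ≤ 1 + x + x ^ 2 := by
  have := Real.abs_exp_sub_one_sub_id_le hx
  have := (abs_le.mp this).2
  linarith

lemma aux_choose_ratio (N k s : ℕ) (hsk : s ≤ k) (hkN : k ≤ N) :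
    (N - s).choose (k - s) * N ^ s ≤ k ^ s * N.choose k := by
  induction s with
  | zero => simp
  | succ s ih =>
    have ih := ih (by omega)
    obtain ⟨b, rfl⟩ : ∃ b, k = b + s + 1 := ⟨k - s - 1, by omega⟩
    obtain ⟨c, rfl⟩ : ∃ c, N = c + s + 1 := ⟨N - s - 1, by omega⟩
    have e1 : c + s + 1 - (s + 1) = c := by omega
    have e2 : b + s + 1 - (s + 1) = b := by omega
    have e3 : c + s + 1 - s = c + 1 := by omega
    have e4 : b + s + 1 - s = b + 1 := by omega
    rw [e1, e2]
    rw [e3, e4] at ih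
    have h := Nat.add_one_mul_choose_eq c b
    have hbc : b ≤ c := by omega
    have h2 : (c + s + 1) * (b + 1) ≤ (b + s + 1) * (c + 1) := by nlinarith
    have : (c + 1) * (c.choose b * (c + s + 1) ^ (s + 1)) ≤
        (c + 1) * ((b + s + 1) ^ (s + 1) * (c + s + 1).choose (b + s + 1)) := by
      calc (c + 1) * (c.choose b * (c + s + 1) ^ (s + 1))
          = ((c + 1) * c.choose b) * (c + s + 1) ^ s * (c + s + 1) := by ring
        _ = ((c + 1).choose (b + 1) * (c + s + 1) ^ s) * ((c + s + 1) * (b + 1)) := by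
            rw [h]; ring
        _ ≤ ((b + s + 1) ^ s * (c + s + 1).choose (b + s + 1)) * ((b + s + 1) * (c + 1)) :=
            Nat.mul_le_mul ih h2
        _ = _ := by ring
    exact Nat.le_of_mul_le_mul_left this (by omega)

lemma aux_count {α : Type*} [DecidableEq α] (V T : Finset α) (k : ℕ) (hT : T ⊆ V)
    (hk : k ≤ V.card) :
    (((V.powersetCard k).filter (fun U => T ⊆ U)).card : ℝ) * (V.card : ℝ) ^ T.card ≤
      (k : ℝ) ^ T.card * (V.card.choose k : ℝ) := by
  by_cases hTk : T.card ≤ k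
  · have h1 : ((V.powersetCard k).filter (fun U => T ⊆ U)).card ≤
        (V.card - T.card).choose (k - T.card) := by
      rw [← Finset.card_sdiff_of_subset hT, ← Finset.card_powersetCard]
      apply Finset.card_le_card_of_injOn (fun U => U \ T)
      · intro U hU
        simp only [Finset.coe_filter, Finset.mem_powersetCard, Set.mem_ofPred_eq] at hU
        simp only [Finset.mem_coe, Finset.mem_powersetCard]
        exact ⟨Finset.sdiff_subset_sdiff hU.1.1 (le_refl _), by
          rw [Finset.card_sdiff_of_subset hU.2, hU.1.2]⟩
      · intro U hU U' hU' h
        simp only [Finset.coe_filter, Finset.mem_powersetCard, Set.mem_ofPred_eq] at hU hU'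
        have h : U \ T = U' \ T := h
        rw [← Finset.sdiff_union_of_subset hU.2, h, Finset.sdiff_union_of_subset hU'.2]
    have h2 := aux_choose_ratio V.card k T.card hTk hk
    exact_mod_cast (Nat.mul_le_mul_right _ h1).trans h2
  · have : (V.powersetCard k).filter (fun U => T ⊆ U) = ∅ := by
      apply Finset.filter_eq_empty_iff.mpr
      intro U hU hTU
      have := Finset.card_le_card hTU
      rw [(Finset.mem_powersetCard.mp hU).2] at this
      omega
    rw [this]
    simp
    positivity

lemma aux_hyp_pos {α : Type*} [DecidableEq α] (V W : Finset α) (k : ℕ) (hW : W ⊆ V)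
    (hk : k ≤ V.card) (y : ℝ) (hy : 0 ≤ y) :
    ∑ U ∈ V.powersetCard k, (y + 1) ^ (U ∩ W).card ≤
      (V.card.choose k : ℝ) * (y * ((k : ℝ) / V.card) + 1) ^ W.card := by
  have h1 : ∀ U : Finset α, (y + 1) ^ (U ∩ W).card =
      ∑ T ∈ W.powerset, if T ⊆ U then y ^ T.card else 0 := by
    intro U
    rw [← Finset.sum_pow_mul_eq_add_pow, ← Finset.sum_filter]
    apply Finset.sum_congr
    · ext T
      simp only [Finset.mem_powerset, Finset.subset_inter_iff, Finset.mem_filter, and_comm]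
    · intros; simp
  simp_rw [h1]
  rw [Finset.sum_comm, ← Finset.sum_pow_mul_eq_add_pow, Finset.mul_sum]
  apply Finset.sum_le_sum
  intro T hT
  have hTV : T ⊆ V := (Finset.mem_powerset.mp hT).trans hW
  rw [← Finset.sum_filter, Finset.sum_const, nsmul_eq_mul, one_pow, mul_one, mul_pow, div_pow]
  have h2 := aux_count V T k hTV hk
  by_cases h0 : T.card = 0
  · have h3 : T = ∅ := Finset.card_eq_zero.mp h0
    subst h3
    simp
  · have hVpos : 0 < (V.card : ℝ) := by
      have := Finset.card_le_card hTV
      exact_mod_cast (by omega)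
    have h3 : (((V.powersetCard k).filter (fun U => T ⊆ U)).card : ℝ) ≤
        (k : ℝ) ^ T.card * (V.card.choose k : ℝ) / (V.card : ℝ) ^ T.card :=
      (le_div_iff₀ (by positivity)).mpr h2
    calc _ ≤ (k : ℝ) ^ T.card * (V.card.choose k : ℝ) / (V.card : ℝ) ^ T.card * y ^ T.card := by
          gcongr
      _ = _ := by ring

lemma aux_hyp_nonneg {α : Type*} [DecidableEq α] (V W : Finset α) (k : ℕ) (hW : W ⊆ V)
    (hk : k ≤ V.card) (ν : ℝ) (h0 : 0 ≤ ν) (h1 : ν ≤ 1) :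
    ∑ U ∈ V.powersetCard k, Real.exp (ν * (U ∩ W).card) ≤
      (V.card.choose k : ℝ) *
        Real.exp (ν * (W.card * ((k : ℝ) / V.card)) + ν ^ 2 * W.card) := by
  have hq := aux_exp_quad (x := ν) (by rw [abs_of_nonneg h0]; exact h1)
  have hy : 0 ≤ Real.exp ν - 1 := by linarith [Real.add_one_le_exp ν]
  have h := aux_hyp_pos V W k hW hk (Real.exp ν - 1) hy
  have e : ∀ U : Finset α, Real.exp (ν * (U ∩ W).card) =
      (Real.exp ν - 1 + 1) ^ (U ∩ W).card := by
    intro U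
    rw [sub_add_cancel, ← Real.exp_nat_mul, mul_comm]
  simp_rw [e]
  refine h.trans ?_
  gcongr
  have hp0 : 0 ≤ (k : ℝ) / V.card := by positivity
  have hp1 : (k : ℝ) / V.card ≤ 1 := by
    apply div_le_one_of_le₀ _ (by positivity)
    exact_mod_cast hk
  set p := (k : ℝ) / V.card
  calc ((Real.exp ν - 1) * p + 1) ^ W.card ≤ (Real.exp (ν * p + ν ^ 2)) ^ W.card := by
        apply pow_le_pow_left₀ (by positivity)
        have := Real.add_one_le_exp (ν * p + ν ^ 2)
        nlinarith [mul_le_mul_of_nonneg_right hq hp0, sq_nonneg ν,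
          mul_le_mul_of_nonneg_left hp1 (sq_nonneg ν)]
    _ = _ := by
        rw [← Real.exp_nat_mul]; congr 1; ring

lemma aux_hyp {α : Type*} [DecidableEq α] (V W : Finset α) (k : ℕ) (hW : W ⊆ V)
    (hk : k ≤ V.card) (ν : ℝ) (h1 : |ν| ≤ 1) :
    ∑ U ∈ V.powersetCard k, Real.exp (ν * (U ∩ W).card) ≤
      (V.card.choose k : ℝ) *
        Real.exp (ν * (W.card * ((k : ℝ) / V.card)) + ν ^ 2 * W.card) := by
  rcases le_total 0 ν with h0 | h0
  · exact aux_hyp_nonneg V W k hW hk ν h0 (abs_le.mp h1).2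
  by_cases hV : V.card = 0
  · have : V = ∅ := Finset.card_eq_zero.mp hV
    subst this
    have : W = ∅ := Finset.subset_empty.mp hW
    subst this
    simp
  have h := aux_hyp_nonneg V W (V.card - k) hW (by omega) (-ν) (by linarith)
    (by linarith [(abs_le.mp h1).1])
  have e : ∑ U ∈ V.powersetCard k, Real.exp (ν * (U ∩ W).card) =
      ∑ U ∈ V.powersetCard (V.card - k), Real.exp (ν * W.card) * Real.exp (-ν * (U ∩ W).card) := by
    apply Finset.sum_bij' (fun U _ => V \ U) (fun U _ => V \ U)
    · intro U hU
      rw [Finset.mem_powersetCard] at hU ⊢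
      exact ⟨Finset.sdiff_subset, by rw [Finset.card_sdiff_of_subset hU.1, hU.2]⟩
    · intro U hU
      rw [Finset.mem_powersetCard] at hU ⊢
      exact ⟨Finset.sdiff_subset, by rw [Finset.card_sdiff_of_subset hU.1, hU.2]; omega⟩
    · intro U hU
      exact Finset.sdiff_sdiff_eq_self (Finset.mem_powersetCard.mp hU).1
    · intro U hU
      exact Finset.sdiff_sdiff_eq_self (Finset.mem_powersetCard.mp hU).1
    · intro U hU
      rw [← Real.exp_add]
      congr 1
      have h3 : (U ∩ W).card + ((V \ U) ∩ W).card = W.card := by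
        rw [← Finset.card_union_of_disjoint]
        · congr 1
          ext x
          simp only [Finset.mem_union, Finset.mem_inter, Finset.mem_sdiff]
          have := @hW x
          tauto
        · rw [Finset.disjoint_left]
          intro x
          simp
          tauto
      rw [← h3]
      push_cast
      ring
  rw [e, ← Finset.mul_sum]
  refine (mul_le_mul_of_nonneg_left h (Real.exp_pos _).le).trans (le_of_eq ?_)
  rw [Nat.choose_symm hk, mul_left_comm, ← Real.exp_add]
  congr 2
  rw [Nat.cast_sub hk]
  have : (V.card : ℝ) ≠ 0 := by exact_mod_cast hV
  field_simp
  ring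

lemma aux_block1 (t : ℕ) (ht : 1 ≤ t) (a : Fin t → ℝ) (M ν : ℝ) (ha : ∀ i, 0 ≤ a i)
    (haM : ∀ i, a i ≤ M) (hν : |ν| * M ≤ 1) :
    ∑ i, Real.exp (ν * a i) ≤
      t * Real.exp (ν * ((∑ i, a i) / t) + ν ^ 2 * M * ((∑ i, a i) / t)) := by
  have htp : (0 : ℝ) < t := by exact_mod_cast ht
  have h1 : ∀ i, Real.exp (ν * a i) ≤ 1 + (ν + ν ^ 2 * M) * a i := by
    intro i
    have := aux_exp_quad (x := ν * a i) (by
      rw [abs_mul, abs_of_nonneg (ha i)]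
      exact (mul_le_mul_of_nonneg_left (haM i) (abs_nonneg _)).trans hν)
    have h2 : a i * a i ≤ M * a i := mul_le_mul_of_nonneg_right (haM i) (ha i)
    nlinarith [mul_le_mul_of_nonneg_left h2 (sq_nonneg ν)]
  calc _ ≤ ∑ i, (1 + (ν + ν ^ 2 * M) * a i) := Finset.sum_le_sum fun i _ => h1 i
    _ = t * ((ν * ((∑ i, a i) / t) + ν ^ 2 * M * ((∑ i, a i) / t)) + 1) := by
        rw [Finset.sum_add_distrib, ← Finset.mul_sum]
        simp
        field_simp
        ring
    _ ≤ _ := by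
        gcongr
        exact Real.add_one_le_exp _

lemma aux_block (t τ : ℕ) (ht : 1 ≤ t) (hτ : τ = 1 ∨ τ = t - 1) (a : Fin t → ℝ) (M ν : ℝ)
    (hM : 0 ≤ M) (ha : ∀ i, 0 ≤ a i)
    (haM : ∀ i, a i ≤ M) (hν : |ν| * M ≤ 1) :
    ∑ S : {S : Finset (Fin t) // S.card = τ}, Real.exp (ν * ∑ i ∈ S.1, a i) ≤
      (Fintype.card {S : Finset (Fin t) // S.card = τ} : ℝ) *
        Real.exp (ν * ((τ : ℝ) / t * ∑ i, a i) + ν ^ 2 * M * ∑ i, a i) := by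
  have htp : (0 : ℝ) < t := by exact_mod_cast ht
  have hA : 0 ≤ ∑ i, a i := Finset.sum_nonneg fun i _ => ha i
  have ht1 : (1 : ℝ) ≤ t := by exact_mod_cast ht
  have hAt : (∑ i, a i) / t ≤ ∑ i, a i := div_le_self hA ht1
  have hAt2 : ν ^ 2 * M * ((∑ i, a i) / t) ≤ ν ^ 2 * M * ∑ i, a i :=
    mul_le_mul_of_nonneg_left hAt (by positivity)
  rcases hτ with rfl | rfl
  · have hb : Function.Bijective
        (fun i : Fin t => (⟨{i}, Finset.card_singleton i⟩ : {S : Finset (Fin t) // S.card = 1})) := by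
      constructor
      · intro i j h
        simpa using h
      · rintro ⟨S, hS⟩
        obtain ⟨i, rfl⟩ := Finset.card_eq_one.mp hS
        exact ⟨i, rfl⟩
    rw [← Fintype.card_of_bijective hb, ← hb.sum_comp]
    simp only [Finset.sum_singleton, Fintype.card_fin]
    refine (aux_block1 t ht a M ν ha haM hν).trans ?_
    refine mul_le_mul_of_nonneg_left (Real.exp_le_exp.mpr ?_) htp.le
    have : ν * (((1 : ℕ) : ℝ) / t * ∑ i, a i) = ν * ((∑ i, a i) / t) := by
      push_cast
      ring
    rw [this]
    linarith
  · have hb : Function.Bijective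
        (fun i : Fin t => (⟨{i}ᶜ, by simp [Finset.card_compl]⟩ :
          {S : Finset (Fin t) // S.card = t - 1})) := by
      constructor
      · intro i j h
        simpa using h
      · rintro ⟨S, hS⟩
        have : Sᶜ.card = 1 := by rw [Finset.card_compl, hS, Fintype.card_fin]; omega
        obtain ⟨i, hi⟩ := Finset.card_eq_one.mp this
        exact ⟨i, by simp [← hi]⟩
    rw [← Fintype.card_of_bijective hb, ← hb.sum_comp]
    simp only [Fintype.card_fin]
    have h := aux_block1 t ht a M (-ν) ha haM (by rwa [abs_neg])
    have e : ∀ x, Real.exp (ν * ∑ i ∈ ({x}ᶜ : Finset (Fin t)), a i) =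
        Real.exp (ν * ∑ i, a i) * Real.exp (-ν * a x) := by
      intro x
      rw [← Real.exp_add]
      congr 1
      have := Finset.sum_compl_add_sum ({x} : Finset (Fin t)) a
      rw [Finset.sum_singleton] at this
      rw [← this]; ring
    simp_rw [e]
    rw [← Finset.mul_sum]
    refine (mul_le_mul_of_nonneg_left h (Real.exp_pos _).le).trans ?_
    rw [mul_left_comm, ← Real.exp_add]
    refine mul_le_mul_of_nonneg_left (Real.exp_le_exp.mpr ?_) htp.le
    rw [Nat.cast_sub ht]
    have : ν * (((t : ℝ) - (1 : ℕ)) / t * ∑ i, a i) =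
      ν * (∑ i, a i) + -ν * ((∑ i, a i) / t) := by
      push_cast
      field_simp
      ring
    rw [this, neg_sq]
    linarith

lemma aux_prod {A B : Type*} [Fintype A] [Fintype B] (s : ℕ) (f : Fin s → A → ℝ) (g : B → ℝ)
    (c : Fin s → ℝ) (e : ℝ)
    (hf : ∀ j, ∑ a, Real.exp (f j a) ≤ (Fintype.card A : ℝ) * Real.exp (c j))
    (hg : ∑ b, Real.exp (g b) ≤ (Fintype.card B : ℝ) * Real.exp e) :
    ∑ ω : (Fin s → A) × B, Real.exp (∑ j, f j (ω.1 j) + g ω.2) ≤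
      (Nat.card ((Fin s → A) × B) : ℝ) * Real.exp (∑ j, c j + e) := by
  classical
  have h1 : ∑ ω : (Fin s → A) × B, Real.exp (∑ j, f j (ω.1 j) + g ω.2) =
      (∏ j, ∑ a, Real.exp (f j a)) * ∑ b, Real.exp (g b) := by
    rw [Finset.prod_univ_sum, Fintype.piFinset_univ, Finset.sum_mul_sum, Fintype.sum_prod_type]
    simp [Real.exp_add, Real.exp_sum]
  rw [h1]
  calc _ ≤ (∏ j, ((Fintype.card A : ℝ) * Real.exp (c j))) * ((Fintype.card B : ℝ) * Real.exp e) := by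
        apply mul_le_mul _ hg (Finset.sum_nonneg fun _ _ => (Real.exp_pos _).le)
          (Finset.prod_nonneg fun _ _ => by positivity)
        exact Finset.prod_le_prod
          (fun _ _ => Finset.sum_nonneg fun _ _ => (Real.exp_pos _).le) (fun j _ => hf j)
    _ = _ := by
        rw [Finset.prod_mul_distrib, Real.exp_add, Real.exp_sum]
        simp [Nat.card_eq_fintype_card]
        ring

lemma aux_markov {Ω : Type*} [Fintype Ω] (h : Ω → ℝ) (c δ : ℝ) (P : Ω → Prop)
    (hs : ∑ ω, Real.exp (h ω) ≤ (Nat.card Ω : ℝ) * Real.exp c)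
    (hP : ∀ ω, P ω → δ ≤ h ω) :
    (Nat.card {ω // P ω} : ℝ) ≤ Real.exp (c - δ) * (Nat.card Ω : ℝ) := by
  classical
  have h1 : (Nat.card {ω // P ω} : ℝ) * Real.exp δ ≤ ∑ ω, Real.exp (h ω) := by
    rw [Nat.card_eq_fintype_card, Fintype.card_subtype, ← nsmul_eq_mul, ← Finset.sum_const]
    refine (Finset.sum_le_sum (g := fun ω => Real.exp (h ω)) ?_).trans
      (Finset.sum_le_sum_of_subset_of_nonneg (Finset.filter_subset _ _)
        fun _ _ _ => (Real.exp_pos _).le)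
    intro ω hω
    exact Real.exp_le_exp.mpr (hP ω (Finset.mem_filter.mp hω).2)
  have h2 := h1.trans hs
  rw [Real.exp_sub]
  rw [div_mul_eq_mul_div, le_div_iff₀ (Real.exp_pos _)]
  linarith

open Classical in
lemma aux_card {n s t : ℕ} (V' : Set (Fin n)) (Vij : Fin t → Fin s → Set (Fin n))
    (hd1 : ∀ i j, Disjoint (Vij i j) V')
    (hd2 : ∀ i j i' j', (i, j) ≠ (i', j') → Disjoint (Vij i j) (Vij i' j'))
    (W : Finset (Fin n)) (U : Set (Fin n)) (hU : U ⊆ V') (S : Fin s → Finset (Fin t)) :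
    (W.filter (fun w => w ∈ U ∪ ⋃ j : Fin s, ⋃ i ∈ S j, Vij i j)).card =
      (W.filter (fun w => w ∈ U)).card + ∑ j, ∑ i ∈ S j, (W.filter (fun w => w ∈ Vij i j)).card := by
  have h1 : W.filter (fun w => w ∈ U ∪ ⋃ j : Fin s, ⋃ i ∈ S j, Vij i j) =
      W.filter (fun w => w ∈ U) ∪
        (Finset.univ.sigma S).biUnion (fun x => W.filter (fun w => w ∈ Vij x.2 x.1)) := by
    ext w
    simp only [Finset.mem_filter, Set.mem_union, Set.mem_iUnion, Finset.mem_union,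
      Finset.mem_biUnion, Finset.mem_sigma, Finset.mem_univ, true_and, Sigma.exists, exists_prop]
    constructor
    · rintro ⟨hw, h | ⟨j, i, h1, h2⟩⟩
      · exact Or.inl ⟨hw, h⟩
      · exact Or.inr ⟨j, i, h1, hw, h2⟩
    · rintro (⟨hw, h⟩ | ⟨j, i, h1, hw, h2⟩)
      · exact ⟨hw, Or.inl h⟩
      · exact ⟨hw, Or.inr ⟨j, i, h1, h2⟩⟩
  rw [h1, Finset.card_union_of_disjoint, Finset.card_biUnion, Finset.sum_sigma]
  · rintro ⟨j, i⟩ _ ⟨j', i'⟩ _ hne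
    rw [Function.onFun, Finset.disjoint_left]
    intro w hw hw'
    have hw := (Finset.mem_filter.mp hw).2
    have hw' := (Finset.mem_filter.mp hw').2
    refine Set.disjoint_left.mp (hd2 i j i' j' ?_) hw hw'
    intro h
    apply hne
    simp only [Prod.mk.injEq] at h
    obtain ⟨rfl, rfl⟩ := h
    rfl
  · rw [Finset.disjoint_left]
    intro w hw hw'
    have hw := (Finset.mem_filter.mp hw).2
    obtain ⟨x, _, hx⟩ := Finset.mem_biUnion.mp hw'
    exact Set.disjoint_left.mp (hd1 x.2 x.1) (Finset.mem_filter.mp hx).2 (hU hw)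

open Classical in
lemma aux_tail {n s t τ : ℕ} (V' : Set (Fin n)) (Vij : Fin t → Fin s → Set (Fin n))
    (ht : 1 ≤ t) (hτ : τ = 1 ∨ τ = t - 1)
    (hd1 : ∀ i j, Disjoint (Vij i j) V')
    (hd2 : ∀ i j i' j', (i, j) ≠ (i', j') → Disjoint (Vij i j) (Vij i' j'))
    (M : ℝ) (hM : 1 ≤ M) (hVM : ∀ i j, ((Vij i j).ncard : ℝ) ≤ M)
    (W : Finset (Fin n)) (hW : (W : Set (Fin n)) ⊆ V' ∪ ⋃ i, ⋃ j, Vij i j)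
    (ν δ : ℝ) (hν : |ν| * M ≤ 1) (P : Omega9 n s t τ V' → Prop)
    (hP : ∀ ω, P ω → δ ≤ ν * ((W.filter (fun w => w ∈ Z9 Vij ω)).card - (τ : ℝ) / t * W.card)) :
    (Nat.card {ω // P ω} : ℝ) ≤ Real.exp (ν ^ 2 * M * W.card + |ν| - δ) *
      (Nat.card (Omega9 n s t τ V') : ℝ) := by
  have htp : (0 : ℝ) < t := by exact_mod_cast ht
  set p : ℝ := (τ : ℝ) / t with hp
  have hp0 : 0 ≤ p := by positivity
  have hp1 : p ≤ 1 := by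
    apply div_le_one_of_le₀ _ htp.le
    exact_mod_cast (by omega : τ ≤ t)
  set k : ℕ := ⌊p * V'.ncard⌋₊ with hk
  set VF : Finset (Fin n) := V'.toFinset with hVF
  set W' : Finset (Fin n) := W.filter (fun w => w ∈ V') with hW'
  have hVc : V'.ncard = VF.card := Set.ncard_eq_toFinset_card' V'
  set a : Fin s → Fin t → ℝ := fun j i => ((W.filter (fun w => w ∈ Vij i j)).card : ℝ) with ha
  have haM : ∀ j i, a j i ≤ M := by
    intro j i
    refine le_trans ?_ (hVM i j)
    rw [Set.ncard_eq_toFinset_card']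
    simp only [ha]
    norm_cast
    apply Finset.card_le_card
    intro w hw
    simpa using (Finset.mem_filter.mp hw).2
  have ha0 : ∀ j i, 0 ≤ a j i := fun j i => Nat.cast_nonneg _
  have hkr : (k : ℝ) ≤ p * VF.card := by
    rw [← hVc]; exact Nat.floor_le (by positivity)
  have hkr2 : p * VF.card < k + 1 := by
    rw [← hVc]; exact Nat.lt_floor_add_one _
  have hkN : k ≤ VF.card := by
    have : (k : ℝ) ≤ VF.card := hkr.trans (mul_le_of_le_one_left (by positivity) hp1)
    exact_mod_cast this
  have hW'V : W' ⊆ VF := by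
    intro w hw
    simpa [hVF] using (Finset.mem_filter.mp hw).2
  have hWcard : (W.card : ℝ) = W'.card + ∑ j, ∑ i, a j i := by
    have := aux_card V' Vij hd1 hd2 W V' (le_refl _) (fun _ => Finset.univ)
    rw [Finset.filter_true_of_mem] at this
    · rw [this]; push_cast; rfl
    · intro w hw
      rcases hW hw with h | h
      · exact Or.inl h
      · right
        simp only [Set.mem_iUnion] at h ⊢
        obtain ⟨i, j, h⟩ := h
        exact ⟨j, i, Finset.mem_univ _, h⟩
  have hν1 : |ν| ≤ 1 := by
    nlinarith [abs_nonneg ν]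
  -- hypergeometric part
  have hB : ∑ b : {U : Finset (Fin n) // (↑U : Set (Fin n)) ⊆ V' ∧ U.card = k},
      Real.exp (ν * (b.1 ∩ W').card) ≤
      (Fintype.card {U : Finset (Fin n) // (↑U : Set (Fin n)) ⊆ V' ∧ U.card = k} : ℝ) *
        Real.exp (ν * (p * W'.card) + ν ^ 2 * M * W'.card + |ν|) := by
    have hmem : ∀ U, U ∈ VF.powersetCard k ↔ ((↑U : Set (Fin n)) ⊆ V' ∧ U.card = k) := by
      intro U
      rw [Finset.mem_powersetCard, hVF, Set.subset_toFinset]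
    rw [← Finset.sum_subtype (VF.powersetCard k) hmem (fun U => Real.exp (ν * (U ∩ W').card))]
    rw [Fintype.card_of_subtype _ hmem, Finset.card_powersetCard]
    refine (aux_hyp VF W' k hW'V hkN ν hν1).trans ?_
    refine mul_le_mul_of_nonneg_left (Real.exp_le_exp.mpr ?_) (by positivity)
    have h1 : ν ^ 2 * W'.card ≤ ν ^ 2 * M * W'.card := by
      have : ν ^ 2 * 1 ≤ ν ^ 2 * M := mul_le_mul_of_nonneg_left hM (sq_nonneg _)
      nlinarith [(Nat.cast_nonneg W'.card : (0:ℝ) ≤ W'.card)]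
    have h2 : |(W'.card : ℝ) * ((k : ℝ) / VF.card) - p * W'.card| ≤ 1 := by
      by_cases h0 : VF.card = 0
      · have : W'.card = 0 := by
          have := Finset.card_le_card hW'V
          omega
        simp [this]
      · have h0' : (0 : ℝ) < VF.card := by exact_mod_cast Nat.pos_of_ne_zero h0
        have hwv : (W'.card : ℝ) ≤ VF.card := by exact_mod_cast Finset.card_le_card hW'V
        have e : (W'.card : ℝ) * ((k : ℝ) / VF.card) - p * W'.card =
            (W'.card / VF.card) * (k - p * VF.card) := by field_simp
        rw [e, abs_mul]
        apply mul_le_one₀ _ (abs_nonneg _)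
        · rw [abs_le]; constructor <;> linarith
        · rw [abs_of_nonneg (by positivity)]
          exact div_le_one_of_le₀ hwv h0'.le
    have h3 : ν * ((W'.card : ℝ) * ((k : ℝ) / VF.card) - p * W'.card) ≤ |ν| := by
      refine (le_abs_self _).trans ?_
      rw [abs_mul]
      exact mul_le_of_le_one_right (abs_nonneg _) h2
    nlinarith
  have hA : ∀ j, ∑ S : {S : Finset (Fin t) // S.card = τ}, Real.exp (ν * ∑ i ∈ S.1, a j i) ≤
      (Fintype.card {S : Finset (Fin t) // S.card = τ} : ℝ) *
        Real.exp (ν * (p * ∑ i, a j i) + ν ^ 2 * M * ∑ i, a j i) := fun j =>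
    aux_block t τ ht hτ (a j) M ν (by linarith) (ha0 j) (haM j) hν
  have hmain := aux_prod s
    (fun j (S : {S : Finset (Fin t) // S.card = τ}) => ν * ∑ i ∈ S.1, a j i)
    (fun b : {U : Finset (Fin n) // (↑U : Set (Fin n)) ⊆ V' ∧ U.card = k} =>
      ν * ((b.1 ∩ W').card : ℝ)) _ _ hA hB
  have hfin := aux_markov _ _ (δ + ν * (p * W.card)) P hmain (by
    intro ω hω
    have h1 := hP ω hω
    have h2 := aux_card V' Vij hd1 hd2 W (↑ω.2.1) ω.2.2.1 (fun j => (ω.1 j).1)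
    have h3 : W.filter (fun w => w ∈ (↑ω.2.1 : Set (Fin n))) = ω.2.1 ∩ W' := by
      ext w
      have := @ω.2.2.1 w
      simp only [Finset.mem_filter, Finset.mem_inter, hW', Finset.mem_coe] at this ⊢
      tauto
    have h3c : (W.filter (fun w => w ∈ (↑ω.2.1 : Set (Fin n)))).card = (ω.2.1 ∩ W').card := by
      rw [h3]
    have h5 := h2.trans (congrArg (· + ∑ j, ∑ i ∈ (ω.1 j).1,
      (W.filter (fun w => w ∈ Vij i j)).card) (Eq.trans (by congr) h3c))
    have h4 : ((W.filter (fun w => w ∈ Z9 Vij ω)).card : ℝ) =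
        ((ω.2.1 ∩ W').card : ℝ) + ∑ j, ∑ i ∈ (ω.1 j).1, a j i := by
      have h6 : (W.filter (fun w => w ∈ Z9 Vij ω)).card = (ω.2.1 ∩ W').card +
          ∑ j, ∑ i ∈ (ω.1 j).1, (W.filter (fun w => w ∈ Vij i j)).card := by
        refine Eq.trans ?_ h5
        unfold Z9
        congr
      rw [h6]
      push_cast
      rfl
    rw [h4] at h1
    rw [← Finset.mul_sum]
    linarith)
  refine hfin.trans (le_of_eq ?_)
  congr 2
  rw [hWcard, Finset.sum_add_distrib, ← Finset.mul_sum, ← Finset.mul_sum, ← Finset.mul_sum]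
  ring

lemma aux_num (K : ℝ) (hK : 0 < K) (n : ℕ) (hn : (2 : ℝ) ^ (9 * (K + 1)) ≤ n) (d : ℝ)
    (hd : Real.logb 2 n ^ 15 ≤ d) :
    1 ≤ d ∧ ∃ lam : ℝ, 0 < lam ∧ lam * d ^ ((1 : ℝ) / 8) ≤ 1 ∧ ∀ w : ℝ, w ≤ 2 * d →
      Real.exp (lam ^ 2 * d ^ ((1 : ℝ) / 8) * w + lam - lam * d ^ ((2 : ℝ) / 3)) ≤
        (n : ℝ) ^ (-K) := by
  have hn0 : (0 : ℝ) < n := lt_of_lt_of_le (by positivity) hn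
  set L := Real.logb 2 n with hL
  have hL9 : 9 * (K + 1) ≤ L := by
    rw [hL, Real.le_logb_iff_rpow_le (by norm_num) hn0]
    exact hn
  have hL1 : 1 ≤ L := by linarith
  have hd1 : 1 ≤ d := (one_le_pow₀ hL1).trans hd
  refine ⟨hd1, ?_⟩
  have hd0 : 0 ≤ d := by linarith
  set x := d ^ ((1 : ℝ) / 24) with hx
  have hx1 : 1 ≤ x := Real.one_le_rpow hd1 (by norm_num)
  have hx0 : 0 < x := by linarith
  have e1 : d ^ ((1 : ℝ) / 8) = x ^ 3 := by
    rw [hx, ← Real.rpow_mul_natCast hd0]; norm_num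
  have e2 : d ^ ((2 : ℝ) / 3) = x ^ 16 := by
    rw [hx, ← Real.rpow_mul_natCast hd0]; norm_num
  have e3 : d = x ^ 24 := by
    rw [hx, ← Real.rpow_mul_natCast hd0]; norm_num
  have hx2 : L ≤ x ^ 2 := by
    have : L ^ 12 ≤ (x ^ 2) ^ 12 := by
      calc L ^ 12 ≤ L ^ 15 := pow_le_pow_right₀ hL1 (by norm_num)
        _ ≤ x ^ 24 := by rw [← e3]; exact hd
        _ = _ := by ring
    exact le_of_pow_le_pow_left₀ (by norm_num) (by positivity) this
  have hx5 : L ^ 2 ≤ x ^ 5 := by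
    calc L ^ 2 ≤ (x ^ 2) ^ 2 := by gcongr
      _ = x ^ 4 := by ring
      _ ≤ x ^ 5 := pow_le_pow_right₀ hx1 (by norm_num)
  rw [e1, e2]
  refine ⟨1 / (6 * x ^ 11), by positivity, ?_, ?_⟩
  · rw [div_mul_eq_mul_div, div_le_one (by positivity)]
    have : x ^ 3 ≤ x ^ 11 := pow_le_pow_right₀ hx1 (by norm_num)
    have : 0 < x ^ 11 := by positivity
    linarith
  · intro w hw
    rw [e3] at hw
    have h1 : (1 / (6 * x ^ 11)) ^ 2 * x ^ 3 * w ≤ x ^ 5 / 18 := by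
      calc _ ≤ (1 / (6 * x ^ 11)) ^ 2 * x ^ 3 * (2 * x ^ 24) := by gcongr
        _ = _ := by field_simp; norm_num
    have h2 : 1 / (6 * x ^ 11) * x ^ 16 = x ^ 5 / 6 := by field_simp
    have h3 : 1 / (6 * x ^ 11) ≤ 1 := by
      rw [div_le_one (by positivity)]
      have : 1 ≤ x ^ 11 := one_le_pow₀ hx1
      linarith
    rw [Real.rpow_def_of_pos hn0]
    apply Real.exp_le_exp.mpr
    rw [h2]
    have hlog : Real.log n ≤ L := by
      have h2 : Real.log 2 ≤ 1 := by linarith [Real.log_two_lt_d9]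
      have h20 : 0 < Real.log 2 := Real.log_pos (by norm_num)
      have : Real.log n = L * Real.log 2 := by
        rw [hL, Real.logb]; field_simp
      rw [this]
      nlinarith
    have h4 : K * Real.log n ≤ K * L := mul_le_mul_of_nonneg_left hlog hK.le
    have h5 : 9 * (K + 1) * L ≤ L ^ 2 := by nlinarith
    nlinarith

/-- Degrees into the random set `Z` concentrate: the failure probability (here expressed
by counting outcomes in the finite uniform product space) is `n^{-ω(1)}`, i.e. for every
`K > 0` it is at most `n^{-K}` for all sufficiently large `n`. -/
theorem statement9 :
    ∀ K : ℝ, 0 < K → ∃ N : ℕ, ∀ n : ℕ, N ≤ n →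
      ∀ (G : SimpleGraph (Fin n)) (V' : Set (Fin n)) (d d' : ℝ) (t s τ : ℕ)
        (Vij : Fin t → Fin s → Set (Fin n)),
        Real.logb 2 n ^ 15 ≤ d → 0 ≤ d' → d' ≤ d →
        1 ≤ t → (t : ℝ) ≤ d → (τ = 1 ∨ τ = t - 1) →
        (∀ i j, Disjoint (Vij i j) V') →
        (∀ i j i' j', (i, j) ≠ (i', j') → Disjoint (Vij i j) (Vij i' j')) →
        (∀ i j, ((Vij i j).ncard : ℝ) ≤ d ^ ((1 : ℝ) / 8)) →
        ∀ v : Fin n,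
          (((G.neighborSet v ∩ (V' ∪ ⋃ i, ⋃ j, Vij i j)).ncard : ℝ) ≤ d + d' →
            (Nat.card {ω : Omega9 n s t τ V' //
                ¬ (((G.neighborSet v ∩ Z9 Vij ω).ncard : ℝ) ≤
                  (τ : ℝ) / t * d + d' + d ^ ((2 : ℝ) / 3))} : ℝ) ≤
              (n : ℝ) ^ (-K) * (Nat.card (Omega9 n s t τ V') : ℝ)) ∧
          (d - d' ≤ ((G.neighborSet v ∩ (V' ∪ ⋃ i, ⋃ j, Vij i j)).ncard : ℝ) →
            (Nat.card {ω : Omega9 n s t τ V' //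
                ¬ ((τ : ℝ) / t * d - d' - d ^ ((2 : ℝ) / 3) ≤
                  ((G.neighborSet v ∩ Z9 Vij ω).ncard : ℝ))} : ℝ) ≤
              (n : ℝ) ^ (-K) * (Nat.card (Omega9 n s t τ V') : ℝ)) := by
  classical
  intro K hK
  refine ⟨⌈(2 : ℝ) ^ (9 * (K + 1))⌉₊, ?_⟩
  intro n hn G V' d d' t s τ Vij hd hd'0 hd'd ht htd hτ hdis1 hdis2 hsize v
  have hn' : (2 : ℝ) ^ (9 * (K + 1)) ≤ n := Nat.ceil_le.mp hn
  obtain ⟨hd1, lam, hlam0, hlamM, hlam⟩ := aux_num K hK n hn' d hd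
  have hM : 1 ≤ d ^ ((1 : ℝ) / 8) := Real.one_le_rpow hd1 (by norm_num)
  have htp : (0 : ℝ) < t := by exact_mod_cast ht
  have hp0 : 0 ≤ (τ : ℝ) / t := by positivity
  have hp1 : (τ : ℝ) / t ≤ 1 := by
    apply div_le_one_of_le₀ _ htp.le
    exact_mod_cast (by omega : τ ≤ t)
  set p : ℝ := (τ : ℝ) / t with hp
  set D : Set (Fin n) := G.neighborSet v ∩ (V' ∪ ⋃ i, ⋃ j, Vij i j) with hD
  constructor
  · intro hdeg
    obtain ⟨W, hWD⟩ : ∃ W : Finset (Fin n), (W : Set (Fin n)) = D :=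
      ⟨D.toFinset, Set.coe_toFinset D⟩
    have hWc : (W.card : ℝ) ≤ d + d' := by
      rw [← Set.ncard_coe_finset, hWD]; exact hdeg
    refine (aux_tail V' Vij ht hτ hdis1 hdis2 _ hM hsize W
      (by rw [hWD]; exact Set.inter_subset_right) lam
      (lam * d ^ ((2 : ℝ) / 3)) (by rwa [abs_of_pos hlam0]) _ ?_).trans ?_
    · intro ω hω
      have hω := not_le.mp hω
      have h1 : (G.neighborSet v ∩ Z9 Vij ω).ncard ≤
          (W.filter (fun w => w ∈ Z9 Vij ω)).card := by
        rw [← Set.ncard_coe_finset]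
        apply Set.ncard_le_ncard _ (Set.toFinite _)
        rintro w ⟨hw1, hw2⟩
        refine Finset.mem_coe.mpr (Finset.mem_filter.mpr ⟨?_, hw2⟩)
        rw [← Finset.mem_coe, hWD]
        refine ⟨hw1, ?_⟩
        rcases hw2 with h | h
        · exact Or.inl (ω.2.2.1 h)
        · right
          simp only [Set.mem_iUnion] at h ⊢
          obtain ⟨j, i, _, h⟩ := h
          exact ⟨i, j, h⟩
      have h1' : ((G.neighborSet v ∩ Z9 Vij ω).ncard : ℝ) ≤
          (W.filter (fun w => w ∈ Z9 Vij ω)).card := by exact_mod_cast h1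
      have h6 : d ^ ((2 : ℝ) / 3) ≤
          ((W.filter (fun w => w ∈ Z9 Vij ω)).card : ℝ) - p * W.card := by
        nlinarith only [hω, h1', hd'0, mul_le_mul_of_nonneg_left hWc hp0,
          mul_le_mul_of_nonneg_right hp1 hd'0]
      exact mul_le_mul_of_nonneg_left h6 hlam0.le
    · apply mul_le_mul_of_nonneg_right _ (Nat.cast_nonneg _)
      rw [abs_of_pos hlam0]
      exact hlam _ (by linarith)
  · intro hdeg
    have hm : ⌈d - d'⌉₊ ≤ D.toFinset.card := by
      rw [← Set.ncard_eq_toFinset_card']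
      exact Nat.ceil_le.mpr hdeg
    obtain ⟨W, hWD, hWc⟩ := Finset.exists_subset_card_eq hm
    have hW1 : d - d' ≤ W.card := by rw [hWc]; exact Nat.le_ceil _
    have hW2 : (W.card : ℝ) ≤ 2 * d := by
      have := Nat.ceil_lt_add_one (a := d - d') (by linarith)
      rw [hWc]; linarith
    have hWD' : (W : Set (Fin n)) ⊆ D := by
      intro w hw
      simpa using hWD hw
    refine (aux_tail V' Vij ht hτ hdis1 hdis2 _ hM hsize W
      (hWD'.trans Set.inter_subset_right) (-lam)
      (lam * d ^ ((2 : ℝ) / 3)) (by rwa [abs_neg, abs_of_pos hlam0]) _ ?_).trans ?_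
    · intro ω hω
      have hω := not_le.mp hω
      have h1 : (W.filter (fun w => w ∈ Z9 Vij ω)).card ≤
          (G.neighborSet v ∩ Z9 Vij ω).ncard := by
        rw [← Set.ncard_coe_finset]
        apply Set.ncard_le_ncard _ (Set.toFinite _)
        intro w hw
        have hw := Finset.mem_filter.mp (Finset.mem_coe.mp hw)
        exact ⟨(hWD' hw.1).1, hw.2⟩
      have h1' : ((W.filter (fun w => w ∈ Z9 Vij ω)).card : ℝ) ≤
          (G.neighborSet v ∩ Z9 Vij ω).ncard := by exact_mod_cast h1
      have h6 : d ^ ((2 : ℝ) / 3) ≤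
          p * W.card - ((W.filter (fun w => w ∈ Z9 Vij ω)).card : ℝ) := by
        nlinarith only [hω, h1', hd'0, mul_le_mul_of_nonneg_left hW1 hp0, mul_le_mul_of_nonneg_right hp1 hd'0]
      have h7 := mul_le_mul_of_nonneg_left h6 hlam0.le
      linarith only [h7]
    · apply mul_le_mul_of_nonneg_right _ (Nat.cast_nonneg _)
      rw [abs_neg, abs_of_pos hlam0, neg_sq]
      exact hlam _ hW2
end
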